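/- arXiv:math/0405171 — 2 statements merged into one kernel-verified Lean document; each statement's English description precedes it below -/
import Mathlib

section
/- There exist constants C > 0, b > 0 and X₀ such that for every nonzero integer k divisible by 4 and every real X ≥ X₀ satisfying log|k| ≤ b·√(log X), one has (1/X) · Σ_{1 ≤ m ≤ X} |S(m,k)| ≤ C · ((log|k|)² / log X)^{1 − 2/π}. In other words, lattice points on circles are equidistributed on average: log((1/X) Σ_{m ≤ X} |S(m,k)|) ≤ C − (1 − 2/π)·log( log X / (log|k|)² ). -/
/-- The set of lattice points `(x, y) ∈ ℤ²` with `x² + y² = n`. -/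
noncomputable def latticeCircle (n : ℕ) : Finset (ℤ × ℤ) :=
  (Finset.Icc (-(n : ℤ)) (n : ℤ) ×ˢ Finset.Icc (-(n : ℤ)) (n : ℤ)).filter
    (fun p => p.1 ^ 2 + p.2 ^ 2 = (n : ℤ))

/-- `r n` is the number of lattice points on the circle of squared radius `n`. -/
noncomputable def latticeR (n : ℕ) : ℕ := (latticeCircle n).card

/-- The angle `θ_u ∈ [0, 2π)` of a lattice point `u`. -/
noncomputable def latticeTheta (u : ℤ × ℤ) : ℝ :=
  if 0 ≤ Complex.arg ((u.1 : ℂ) + (u.2 : ℂ) * Complex.I)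
  then Complex.arg ((u.1 : ℂ) + (u.2 : ℂ) * Complex.I)
  else Complex.arg ((u.1 : ℂ) + (u.2 : ℂ) * Complex.I) + 2 * Real.pi

/-- The exponential sum `S(m, k) = Σ_{u ∈ ℤ², |u|² = m} exp(i k θ_u)`. -/
noncomputable def latticeS (m : ℕ) (k : ℤ) : ℂ :=
  ∑ u ∈ latticeCircle m, Complex.exp ((k : ℂ) * (latticeTheta u : ℂ) * Complex.I)



namespace LP
open GaussianInt

/-- the unit-circle character on Gaussian integers -/
noncomputable def xi (k : ℤ) (u : GaussianInt) : ℂ := ((u : ℂ) / (‖(u : ℂ)‖ : ℂ)) ^ k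

lemma xi_mul (k : ℤ) (u v : GaussianInt) : xi k (u * v) = xi k u * xi k v := by
  unfold xi
  rw [GaussianInt.toComplex_mul, norm_mul, ← mul_zpow]
  congr 1
  push_cast
  rw [div_mul_div_comm]

/-- Gaussian integers of norm n -/
noncomputable def G (n : ℕ) : Finset GaussianInt :=
  (latticeCircle n).image (fun p => (⟨p.1, p.2⟩ : GaussianInt))

lemma mem_G {n : ℕ} {u : GaussianInt} : u ∈ G n ↔ u.norm = n := by
  unfold G latticeCircle
  simp only [Finset.mem_image, Finset.mem_filter, Finset.mem_product, Finset.mem_Icc, Prod.exists,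
    Zsqrtd.norm_def]
  constructor
  · rintro ⟨a, b, ⟨_, h⟩, rfl⟩
    simp only; linarith
  · intro h
    refine ⟨u.re, u.im, ⟨⟨⟨?_, ?_⟩, ?_, ?_⟩, ?_⟩, rfl⟩
    · nlinarith [sq_nonneg u.im, Int.le_self_sq (-u.re)]
    · nlinarith [sq_nonneg u.im, Int.le_self_sq u.re]
    · nlinarith [sq_nonneg u.re, Int.le_self_sq (-u.im)]
    · nlinarith [sq_nonneg u.re, Int.le_self_sq u.im]
    · linarith

lemma G_ne_zero {n : ℕ} (hn : n ≠ 0) {u : GaussianInt} (hu : u ∈ G n) : u ≠ 0 := by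
  rintro rfl
  rw [mem_G] at hu
  simp at hu
  exact hn (by exact_mod_cast hu.symm)

lemma xi_eq_exp (k : ℤ) (x : ℤ × ℤ) (hx : (⟨x.1, x.2⟩ : GaussianInt) ≠ 0) :
    Complex.exp ((k : ℂ) * (latticeTheta x : ℂ) * Complex.I) = xi k ⟨x.1, x.2⟩ := by
  have hz : ((x.1 : ℂ) + (x.2 : ℂ) * Complex.I) ≠ 0 := by
    rw [← GaussianInt.toComplex_def']
    simpa using hx
  have h1 : Complex.exp ((latticeTheta x : ℂ) * Complex.I) =
      Complex.exp ((Complex.arg ((x.1 : ℂ) + (x.2 : ℂ) * Complex.I) : ℂ) * Complex.I) := by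
    unfold latticeTheta
    split_ifs
    · rfl
    · push_cast
      rw [add_mul, Complex.exp_add, Complex.exp_two_pi_mul_I, mul_one]
  rw [mul_assoc, Complex.exp_int_mul, h1]
  unfold xi
  rw [GaussianInt.toComplex_def']
  congr 1
  rw [eq_div_iff (by simpa using hz), mul_comm]
  exact Complex.norm_mul_exp_arg_mul_I _

lemma S_eq (m : ℕ) (hm : m ≠ 0) (k : ℤ) : latticeS m k = ∑ u ∈ G m, xi k u := by
  unfold G latticeS
  rw [Finset.sum_image]
  · apply Finset.sum_congr rfl
    intro x hx
    apply xi_eq_exp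
    apply G_ne_zero hm
    exact Finset.mem_image_of_mem _ hx
  · intro a _ b _ h
    simp only [Zsqrtd.mk.injEq] at h
    exact Prod.ext h.1 h.2

noncomputable def a (k : ℤ) (n : ℕ) : ℂ := if n = 0 then 0 else (∑ u ∈ G n, xi k u) / 4

lemma a_zero (k : ℤ) : a k 0 = 0 := by simp [a]

lemma S_eq_a (m : ℕ) (hm : m ≠ 0) (k : ℤ) : latticeS m k = 4 * a k m := by
  rw [S_eq m hm, a, if_neg hm]; ring

lemma norm_xi (k : ℤ) {u : GaussianInt} (hu : u ≠ 0) : ‖xi k u‖ = 1 := by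
  unfold xi
  have : ‖(u : ℂ)‖ ≠ 0 := by simpa using hu
  rw [norm_zpow, norm_div]
  simp [this]

lemma xi_zero' (u : GaussianInt) : xi 0 u = 1 := by simp [xi]

lemma a_zero_eq (n : ℕ) (hn : n ≠ 0) : a 0 n = ((G n).card : ℂ) / 4 := by
  simp [a, hn, xi_zero']

lemma norm_a_le (k : ℤ) (n : ℕ) : ‖a k n‖ ≤ (a 0 n).re := by
  by_cases hn : n = 0
  · simp [a, hn]
  rw [a_zero_eq n hn, a, if_neg hn, norm_div]
  have h : ‖∑ u ∈ G n, xi k u‖ ≤ (G n).card := by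
    refine (norm_sum_le _ _).trans ?_
    rw [Finset.sum_congr rfl (fun u hu => norm_xi k (G_ne_zero hn hu))]
    simp
  have : (((G n).card : ℂ) / 4).re = ((G n).card : ℝ) / 4 := by
    rw [show (((G n).card : ℂ) / 4) = (((G n).card / 4 : ℝ) : ℂ) by push_cast; rfl]
    exact Complex.ofReal_re _
  rw [this]
  simp
  linarith

lemma G_one : G 1 = {1, -1, ⟨0, 1⟩, ⟨0, -1⟩} := by
  ext u
  rw [mem_G]
  simp only [Finset.mem_insert, Finset.mem_singleton, Zsqrtd.ext_iff, Zsqrtd.norm_def]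
  simp
  constructor
  · intro h
    have h1 : u.re ≤ 1 := by nlinarith [sq_nonneg u.im, Int.le_self_sq u.re]
    have h2 : -1 ≤ u.re := by nlinarith [sq_nonneg u.im, Int.le_self_sq (-u.re)]
    have h3 : u.im ≤ 1 := by nlinarith [sq_nonneg u.re, Int.le_self_sq u.im]
    have h4 : -1 ≤ u.im := by nlinarith [sq_nonneg u.re, Int.le_self_sq (-u.im)]
    interval_cases u.re <;> interval_cases u.im <;> simp_all
  · rintro (h | h | h | h) <;> simp [h]

lemma card_G_one : (G 1).card = 4 := by rw [G_one]; decide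

lemma xi_unit {k : ℤ} (hk : 4 ∣ k) {u : GaussianInt} (hu : u ∈ G 1) : xi k u = 1 := by
  obtain ⟨j, rfl⟩ := hk
  rw [G_one] at hu
  unfold xi
  simp only [Finset.mem_insert, Finset.mem_singleton] at hu
  have e : (4 : ℤ) = ((4 : ℕ) : ℤ) := rfl
  rw [zpow_mul, e, zpow_natCast]
  rcases hu with rfl | rfl | rfl | rfl <;>
    simp [GaussianInt.toComplex_def, Even.neg_pow (show Even 4 by decide)]

lemma a_one {k : ℤ} (hk : 4 ∣ k) : a k 1 = 1 := by
  rw [a, if_neg one_ne_zero, Finset.sum_congr rfl (fun u hu => xi_unit hk hu)]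
  simp [card_G_one]

lemma mul_star_G {n : ℕ} {u : GaussianInt} (hu : u ∈ G n) : u * star u = (n : GaussianInt) := by
  rw [mem_G] at hu
  rw [← Zsqrtd.norm_eq_mul_conj, hu]; simp

lemma mul_mem_G {m n : ℕ} {u v : GaussianInt} (hu : u ∈ G m) (hv : v ∈ G n) : u * v ∈ G (m * n) := by
  rw [mem_G] at *
  rw [Zsqrtd.norm_mul, hu, hv]; push_cast; rfl

lemma star_mem_G {n : ℕ} {u : GaussianInt} (hu : u ∈ G n) : star u ∈ G n := by
  rw [mem_G] at *
  rw [Zsqrtd.norm_conj, hu]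

lemma norm_eq_of_dvd {m n : ℕ} (hmn : m.Coprime n) {u v : GaussianInt} (hu : u ∣ (m : GaussianInt))
    (hv : v ∣ (n : GaussianInt)) (h : u * v ∈ G (m * n)) : u ∈ G m ∧ v ∈ G n := by
  rw [mem_G, Zsqrtd.norm_mul] at h
  have hu' : u.norm ∣ (m : ℤ) * m := by
    obtain ⟨c, hc⟩ := hu
    refine ⟨c.norm, ?_⟩
    rw [← Zsqrtd.norm_mul, ← hc, Zsqrtd.norm_natCast]
  have hv' : v.norm ∣ (n : ℤ) * n := by
    obtain ⟨c, hc⟩ := hv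
    refine ⟨c.norm, ?_⟩
    rw [← Zsqrtd.norm_mul, ← hc, Zsqrtd.norm_natCast]
  obtain ⟨x, hx⟩ := Int.eq_ofNat_of_zero_le (GaussianInt.norm_nonneg u)
  obtain ⟨y, hy⟩ := Int.eq_ofNat_of_zero_le (GaussianInt.norm_nonneg v)
  rw [mem_G, mem_G, hx, hy]
  rw [hx, hy] at h
  rw [hx] at hu'
  rw [hy] at hv'
  norm_cast at *
  have c1 : Nat.Coprime x n := Nat.Coprime.coprime_dvd_left hu' (hmn.mul_left hmn)
  have c2 : Nat.Coprime y m := Nat.Coprime.coprime_dvd_left hv' (hmn.symm.mul_left hmn.symm)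
  constructor
  · apply Nat.dvd_antisymm
    · exact c1.dvd_of_dvd_mul_right (Dvd.intro _ h)
    · exact c2.symm.dvd_of_dvd_mul_right ⟨n, h⟩
  · apply Nat.dvd_antisymm
    · exact c2.dvd_of_dvd_mul_left (Dvd.intro_left _ h)
    · exact c1.symm.dvd_of_dvd_mul_left ⟨m, by rw [h, mul_comm]⟩

lemma fiber_card {m n : ℕ} (hm : m ≠ 0) (hn : n ≠ 0) (hmn : m.Coprime n) {w : GaussianInt}
    (hw : w ∈ G (m * n)) :
    (((G m) ×ˢ (G n)).filter (fun x => x.1 * x.2 = w)).card = 4 := by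
  obtain ⟨u, v, hu, hv, rfl⟩ : ∃ u v : GaussianInt, u ∣ (m : GaussianInt) ∧ v ∣ (n : GaussianInt) ∧
      w = u * v := by
    have : w ∣ (m : GaussianInt) * n := ⟨star w, by rw [mul_star_G hw]; push_cast; rfl⟩
    obtain ⟨u, v, hu, hv, h⟩ := exists_dvd_and_dvd_of_dvd_mul this
    exact ⟨u, v, hu, hv, h⟩
  obtain ⟨hu, hv⟩ := norm_eq_of_dvd hmn hu hv hw
  have hu0 := G_ne_zero hm hu
  have hv0 := G_ne_zero hn hv
  rw [← card_G_one]
  symm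
  have hco : ∀ u' ∈ G m, ∀ v' ∈ G n, IsCoprime u' v' := by
    intro u' hu' v' hv'
    have : IsCoprime ((m : ℕ) : GaussianInt) ((n : ℕ) : GaussianInt) := by
      have h := (Nat.isCoprime_iff_coprime.mpr hmn).map (Int.castRingHom GaussianInt)
      simpa using h
    rw [← mul_star_G hu', ← mul_star_G hv'] at this
    exact this.of_mul_left_left.of_mul_right_left
  apply Finset.card_bij (fun e _ => (u * e, v * star e))
  · intro e he
    have h1 := mul_star_G he
    simp only [Finset.mem_filter, Finset.mem_product]
    refine ⟨⟨?_, ?_⟩, ?_⟩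
    · simpa using mul_mem_G hu he
    · simpa using mul_mem_G hv (star_mem_G he)
    · calc u * e * (v * star e) = u * v * (e * star e) := by ring
        _ = u * v := by rw [h1]; simp
  · intro e he e' he' h
    simp only [Prod.mk.injEq] at h
    exact mul_left_cancel₀ hu0 h.1
  · rintro ⟨u', v'⟩ h
    simp only [Finset.mem_filter, Finset.mem_product] at h
    obtain ⟨⟨hu', hv'⟩, h⟩ := h
    have hd : u ∣ u' := (hco u hu v' hv').dvd_of_dvd_mul_right (by rw [h]; exact Dvd.intro _ rfl)
    obtain ⟨e, rfl⟩ := hd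
    have he : e ∈ G 1 := by
      rw [mem_G] at *
      rw [Zsqrtd.norm_mul, hu] at hu'
      have : (m : ℤ) ≠ 0 := by exact_mod_cast hm
      simpa using mul_left_cancel₀ this (hu'.trans (mul_one _).symm)
    refine ⟨e, he, ?_⟩
    have h1 := mul_star_G he
    have h2 : e * v' = v := by
      apply mul_left_cancel₀ hu0
      rw [← h]; ring
    ext1
    · rfl
    · simp only
      rw [← h2]
      calc e * v' * star e = (e * star e) * v' := by ring
        _ = v' := by rw [h1]; simp

lemma a_mul (k : ℤ) {m n : ℕ} (hmn : m.Coprime n) : a k (m * n) = a k m * a k n := by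
  by_cases hm : m = 0
  · simp [a, hm]
  by_cases hn : n = 0
  · simp [a, hn]
  have key : (∑ u ∈ G m, xi k u) * (∑ v ∈ G n, xi k v) = 4 * ∑ w ∈ G (m * n), xi k w := by
    rw [Finset.sum_mul_sum, ← Finset.sum_product']
    rw [← Finset.sum_fiberwise_of_maps_to (s := (G m) ×ˢ (G n)) (t := G (m * n))
      (g := fun x => x.1 * x.2)]
    · rw [Finset.mul_sum]
      apply Finset.sum_congr rfl
      intro w hw
      rw [Finset.sum_congr rfl (g := fun _ => xi k w)]
      · rw [Finset.sum_const, fiber_card hm hn hmn hw]; simp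
      · intro x hx
        rw [Finset.mem_filter] at hx
        rw [← hx.2, xi_mul]
    · intro x hx
      rw [Finset.mem_product] at hx
      exact mul_mem_G hx.1 hx.2
  rw [a, a, a, if_neg hm, if_neg hn, if_neg (mul_ne_zero hm hn), div_mul_div_comm, key]
  ring

end LP

namespace LP
open GaussianInt

lemma prime_of_mem_G {p : ℕ} (hp : p.Prime) {q : GaussianInt} (hq : q ∈ G p) : Prime q := by
  rw [mem_G] at hq
  rw [← irreducible_iff_prime]
  constructor
  · intro h
    rw [← Zsqrtd.norm_eq_one_iff, hq] at h
    simp at h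
    exact hp.one_lt.ne' h
  · intro x y h
    rw [← Zsqrtd.norm_eq_one_iff, ← Zsqrtd.norm_eq_one_iff]
    rw [h, Zsqrtd.norm_mul] at hq
    have := congrArg Int.natAbs hq
    rw [Int.natAbs_mul, Int.natAbs_natCast] at this
    have hp' := hp
    rw [← this] at hp'
    rcases Nat.prime_mul_iff.mp hp' with h | h
    · exact Or.inr h.2
    · exact Or.inl h.2

lemma star_dvd_star {x y : GaussianInt} (h : x ∣ y) : star x ∣ star y := by
  obtain ⟨c, rfl⟩ := h
  exact ⟨star c, by rw [star_mul]; ring⟩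

lemma dvd_or_star_dvd {q u : GaussianInt} (hq : Prime q) {n : ℕ} (hu : u ∈ G n)
    (h : q ∣ (n : GaussianInt)) : q ∣ u ∨ star q ∣ u := by
  rw [← mul_star_G hu] at h
  rcases hq.dvd_or_dvd h with h | h
  · exact Or.inl h
  · right
    have := star_dvd_star h
    rwa [star_star] at this

lemma mem_G_of_mul {p n : ℕ} (hp : p ≠ 0) {q v : GaussianInt} (hq : q ∈ G p) (h : q * v ∈ G (p * n)) :
    v ∈ G n := by
  rw [mem_G] at *
  rw [Zsqrtd.norm_mul, hq] at h
  push_cast at h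
  exact mul_left_cancel₀ (by exact_mod_cast hp) h

lemma sum_image_mul (k : ℤ) {q : GaussianInt} (hq : q ≠ 0) (s : Finset GaussianInt) :
    ∑ u ∈ s.image (fun v => q * v), xi k u = xi k q * ∑ u ∈ s, xi k u := by
  rw [Finset.sum_image (by intro x _ y _ h; exact mul_left_cancel₀ hq h), Finset.mul_sum]
  simp [xi_mul]

lemma xi_exp (k : ℤ) {u : GaussianInt} (hu : u ≠ 0) :
    xi k u = Complex.exp ((k * Complex.arg u : ℝ) * Complex.I) := by
  unfold xi
  have : (u : ℂ) ≠ 0 := by simpa using hu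
  push_cast
  rw [mul_assoc, Complex.exp_int_mul]
  congr 1
  rw [div_eq_iff (by simpa using hu), mul_comm]
  exact (Complex.norm_mul_exp_arg_mul_I _).symm

lemma xi_star (k : ℤ) (u : GaussianInt) : xi k (star u) = (starRingEnd ℂ) (xi k u) := by
  unfold xi
  rw [GaussianInt.toComplex_star, map_zpow₀, map_div₀]
  simp

lemma xi_add_star (k : ℤ) {u : GaussianInt} (hu : u ≠ 0) :
    xi k u + xi k (star u) = ((2 * Real.cos (k * Complex.arg u) : ℝ) : ℂ) := by
  rw [xi_star, xi_exp k hu, ← Complex.exp_conj]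
  push_cast
  rw [Complex.two_cos]
  simp

lemma xi_natCast (k : ℤ) {n : ℕ} (hn : n ≠ 0) : xi k (n : GaussianInt) = 1 := by
  unfold xi
  have : (n : ℂ) ≠ 0 := by exact_mod_cast hn
  simp [this]

/-- Local data at a prime. -/
def Loc (p : ℕ) (θ ν c : ℝ) : Prop :=
  ((ν = 1 ∧ c = 0 ∧ 2 ≤ p) ∨ (ν = 0 ∧ c = -1 ∧ 3 ≤ p) ∨ (ν = 2 ∧ c = 1 ∧ 5 ≤ p)) ∧
  ∀ k : ℤ, 4 ∣ k → a k p = ((ν * Real.cos (k * θ) : ℝ) : ℂ) ∧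
    ∀ e : ℕ, a k (p ^ (e + 2)) = a k p * a k (p ^ (e + 1)) - (c : ℂ) * a k (p ^ e)

lemma loc_one {p : ℕ} (hp : p.Prime) (h1 : p % 4 = 1) : ∃ θ, Loc p θ 2 1 := by
  have : Fact p.Prime := ⟨hp⟩
  obtain ⟨x, y, hxy⟩ := Nat.Prime.sq_add_sq (p := p) (by omega)
  set q : GaussianInt := ⟨x, y⟩ with hqdef
  have hqG : q ∈ G p := by
    rw [mem_G, Zsqrtd.norm_def, hqdef]
    simp only
    rw [← hxy]; push_cast; ring
  have hp0 : p ≠ 0 := hp.ne_zero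
  have hq := prime_of_mem_G hp hqG
  have hqs := prime_of_mem_G hp (star_mem_G hqG)
  have hq0 := G_ne_zero hp0 hqG
  have hqs0 := G_ne_zero hp0 (star_mem_G hqG)
  have hnd : ¬ q ∣ star q := by
    intro h
    have h2 : q ∣ ((2 * x : ℕ) : GaussianInt) := by
      have : ((2 * x : ℕ) : GaussianInt) = q + star q := by
        rw [hqdef]; ext <;> simp; ring
      rw [this]
      exact dvd_add dvd_rfl h
    have h3 : (p : ℤ) ∣ ((2 * x : ℕ) : ℤ) * ((2 * x : ℕ) : ℤ) := by
      obtain ⟨c, hc⟩ := h2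
      refine ⟨c.norm, ?_⟩
      rw [mem_G] at hqG
      rw [← hqG, ← Zsqrtd.norm_mul, ← hc, Zsqrtd.norm_natCast]
    have h4 : p ∣ (2 * x) * (2 * x) := by exact_mod_cast h3
    have h5 : p ∣ 2 * x := by
      rcases (Nat.Prime.dvd_mul hp).mp h4 with h | h <;> exact h
    have h6 : p ∣ x := by
      rcases (Nat.Prime.dvd_mul hp).mp h5 with h | h
      · have := Nat.le_of_dvd (by norm_num) h
        interval_cases p <;> omega
      · exact h
    have hx0 : x ≠ 0 := by
      rintro rfl
      have : p = y * y := by rw [← hxy]; ring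
      rw [this] at hp
      exact Nat.not_prime_mul (by rintro rfl; norm_num at hp) (by rintro rfl; norm_num at hp) hp
    have h7 := Nat.le_of_dvd (Nat.pos_of_ne_zero hx0) h6
    have : 2 ≤ p := hp.two_le
    nlinarith
  have hpq : (p : GaussianInt) = q * star q := (mul_star_G hqG).symm
  have hunion : ∀ n : ℕ, G (p * n) = (G n).image (fun v => q * v) ∪ (G n).image (fun v => star q * v) := by
    intro n
    ext u
    simp only [Finset.mem_union, Finset.mem_image]
    constructor
    · intro hu
      have : q ∣ ((p * n : ℕ) : GaussianInt) := by
        push_cast; rw [hpq, mul_assoc]; exact Dvd.intro _ rfl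
      rcases dvd_or_star_dvd hq hu this with h | h
      · left
        obtain ⟨v, rfl⟩ := h
        exact ⟨v, mem_G_of_mul hp0 hqG hu, rfl⟩
      · right
        obtain ⟨v, rfl⟩ := h
        exact ⟨v, mem_G_of_mul hp0 (star_mem_G hqG) hu, rfl⟩
    · rintro (⟨v, hv, rfl⟩ | ⟨v, hv, rfl⟩)
      · exact mul_mem_G hqG hv
      · exact mul_mem_G (star_mem_G hqG) hv
  have hstep : ∀ {u v v' : GaussianInt}, q * v = u → star q * v' = u → ∃ t, u = q * star q * t := by
    intro u v v' h h'
    have : q ∣ star q * v' := by rw [h', ← h]; exact Dvd.intro _ rfl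
    rcases hq.dvd_or_dvd this with h2 | h2
    · exact absurd h2 hnd
    · obtain ⟨t, rfl⟩ := h2
      exact ⟨t, by rw [← h']; ring⟩
  have hinter : ∀ n : ℕ, (G (p * n)).image (fun v => q * v) ∩ (G (p * n)).image (fun v => star q * v)
      = (G n).image (fun v => (p : GaussianInt) * v) := by
    intro n
    ext u
    simp only [Finset.mem_inter, Finset.mem_image]
    constructor
    · rintro ⟨⟨v, hv, h⟩, ⟨v', hv', h'⟩⟩
      obtain ⟨t, ht⟩ := hstep h h'
      refine ⟨t, ?_, by rw [ht, hpq]⟩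
      have : v = star q * t := by
        apply mul_left_cancel₀ hq0
        rw [h, ht]; ring
      rw [this] at hv
      exact mem_G_of_mul hp0 (star_mem_G hqG) hv
    · rintro ⟨t, ht, rfl⟩
      exact ⟨⟨star q * t, mul_mem_G (star_mem_G hqG) ht, by rw [hpq]; ring⟩,
        ⟨q * t, mul_mem_G hqG ht, by rw [hpq]; ring⟩⟩
  have hinter1 : (G 1).image (fun v => q * v) ∩ (G 1).image (fun v => star q * v) = ∅ := by
    rw [Finset.eq_empty_iff_forall_notMem]
    intro u hu
    simp only [Finset.mem_inter, Finset.mem_image] at hu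
    obtain ⟨⟨v, hv, h⟩, ⟨v', hv', h'⟩⟩ := hu
    apply hnd
    have h1 := mul_star_G hv'
    exact ⟨v * star v', by
      calc star q = star q * (v' * star v') := by rw [h1]; simp
        _ = (star q * v') * star v' := by ring
        _ = _ := by rw [h', ← h]; ring⟩
  have hS1 : ∀ k : ℤ, 4 ∣ k → a k p = xi k q + xi k (star q) := by
    intro k hk
    have h := Finset.sum_union_inter (s₁ := (G 1).image (fun v => q * v))
      (s₂ := (G 1).image (fun v => star q * v)) (f := xi k)
    rw [← hunion 1, hinter1, sum_image_mul k hq0, sum_image_mul k hqs0,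
      Finset.sum_congr rfl (fun u hu => xi_unit hk hu)] at h
    simp only [mul_one, Finset.sum_empty, add_zero, Finset.sum_const, card_G_one] at h
    rw [a, if_neg hp0, h]
    simp; ring
  refine ⟨Complex.arg q, Or.inr (Or.inr ⟨rfl, rfl, ?_⟩), fun k hk => ⟨?_, ?_⟩⟩
  · have := hp.two_le
    omega
  · rw [hS1 k hk, xi_add_star k hq0]
  · intro e
    have h := Finset.sum_union_inter (s₁ := (G (p * p ^ e)).image (fun v => q * v))
      (s₂ := (G (p * p ^ e)).image (fun v => star q * v)) (f := xi k)
    rw [← hunion, hinter, sum_image_mul k hq0, sum_image_mul k hqs0,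
      sum_image_mul k (by exact_mod_cast hp0), xi_natCast k hp0] at h
    rw [hS1 k hk, pow_succ' p (e+1), pow_succ' p e, a, a, a, if_neg, if_neg, if_neg]
    · push_cast
      linear_combination (1/4 : ℂ) * h
    all_goals positivity

lemma loc_three {p : ℕ} (hp : p.Prime) (h3 : p % 4 = 3) : ∃ θ, Loc p θ 0 (-1) := by
  have : Fact p.Prime := ⟨hp⟩
  have hp0 : p ≠ 0 := hp.ne_zero
  have hq := GaussianInt.prime_of_nat_prime_of_mod_four_eq_three p h3
  have hps : star (p : GaussianInt) = p := by simp
  have hpG : (p : GaussianInt) ∈ G (p * p) := by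
    rw [mem_G, Zsqrtd.norm_natCast]; push_cast; rfl
  have h0 : G p = ∅ := by
    rw [Finset.eq_empty_iff_forall_notMem]
    intro u hu
    have : (p : GaussianInt) ∣ u := by
      rcases dvd_or_star_dvd hq hu dvd_rfl with h | h
      · exact h
      · rwa [hps] at h
    obtain ⟨v, rfl⟩ := this
    rw [mem_G, Zsqrtd.norm_mul, Zsqrtd.norm_natCast] at hu
    have h1 : (p : ℤ) * v.norm = 1 := by
      apply mul_left_cancel₀ (show (p : ℤ) ≠ 0 by exact_mod_cast hp0)
      rw [← mul_assoc, hu, mul_one]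
    have h2 : (p : ℤ) ∣ 1 := ⟨_, h1.symm⟩
    have := Int.le_of_dvd (by norm_num) h2
    have := hp.two_le
    omega
  have hG : ∀ n, G (p * p * n) = (G n).image (fun v => (p : GaussianInt) * v) := by
    intro n
    ext u
    simp only [Finset.mem_image]
    constructor
    · intro hu
      have : (p : GaussianInt) ∣ u := by
        rcases dvd_or_star_dvd hq hu (by push_cast; rw [mul_assoc]; exact Dvd.intro _ rfl) with h | h
        · exact h
        · rwa [hps] at h
      obtain ⟨v, rfl⟩ := this
      exact ⟨v, mem_G_of_mul (mul_ne_zero hp0 hp0) hpG hu, rfl⟩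
    · rintro ⟨v, hv, rfl⟩
      exact mul_mem_G hpG hv
  refine ⟨0, Or.inr (Or.inl ⟨rfl, rfl, ?_⟩), fun k hk => ⟨?_, ?_⟩⟩
  · have := hp.two_le
    omega
  · simp [a, h0]
  · intro e
    have : a k p = 0 := by simp [a, h0]
    rw [this, zero_mul, show p ^ (e+2) = p * p * p ^ e by ring, a, a, if_neg, if_neg, hG, sum_image_mul k
      (by exact_mod_cast hp0), xi_natCast k hp0]
    · push_cast; ring
    all_goals positivity

lemma loc_two : ∃ θ, Loc 2 θ 1 0 := by
  set q : GaussianInt := ⟨1, 1⟩ with hq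
  have hqG : q ∈ G 2 := by rw [mem_G, Zsqrtd.norm_def]; simp [hq]
  have hqp := prime_of_mem_G Nat.prime_two hqG
  have hq0 := G_ne_zero two_ne_zero hqG
  have hqs : q ∣ star q := ⟨⟨0, -1⟩, by rw [hq]; ext <;> simp⟩
  have hG : ∀ n, G (2 * n) = (G n).image (fun v => q * v) := by
    intro n
    ext u
    simp only [Finset.mem_image]
    constructor
    · intro hu
      have : q ∣ u := by
        rcases dvd_or_star_dvd hqp hu (by
          push_cast; exact dvd_mul_of_dvd_left ⟨star q, by rw [mul_star_G hqG]; rfl⟩ _) with h | h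
        · exact h
        · exact hqs.trans h
      obtain ⟨v, rfl⟩ := this
      exact ⟨v, mem_G_of_mul two_ne_zero hqG hu, rfl⟩
    · rintro ⟨v, hv, rfl⟩
      exact mul_mem_G hqG hv
  have hS1 : ∀ k : ℤ, 4 ∣ k → a k 2 = xi k q := by
    intro k hk
    have h := hG 1
    rw [mul_one] at h
    rw [a, if_neg two_ne_zero, h, sum_image_mul k hq0, Finset.sum_congr rfl (fun u hu => xi_unit hk hu)]
    simp [card_G_one]
  refine ⟨Real.pi / 4, Or.inl ⟨rfl, rfl, le_rfl⟩, fun k hk => ⟨?_, ?_⟩⟩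
  · rw [hS1 k hk, xi_exp k hq0]
    have harg : Complex.arg (q : ℂ) = Real.pi / 4 := by
      have : (q : ℂ) = (Real.sqrt 2 : ℝ) * (Real.cos (Real.pi / 4) + Real.sin (Real.pi / 4) * Complex.I) := by
        rw [Real.cos_pi_div_four, Real.sin_pi_div_four, hq, GaussianInt.toComplex_def]
        have : ((Real.sqrt 2 : ℝ) : ℂ) * (Real.sqrt 2 : ℝ) = 2 := by
          norm_cast
          rw [Real.mul_self_sqrt (by norm_num)]
        push_cast
        linear_combination (-1/2 - Complex.I/2) * this
      rw [this, Complex.ofReal_cos, Complex.ofReal_sin]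
      exact Complex.arg_mul_cos_add_sin_mul_I (r := Real.sqrt 2) (by positivity)
        (θ := Real.pi / 4) ⟨by linarith [Real.pi_pos], by linarith [Real.pi_pos]⟩
    rw [harg, Complex.exp_mul_I]
    obtain ⟨j, rfl⟩ := hk
    have : ((((4 * j : ℤ) : ℝ) * (Real.pi / 4) : ℝ) : ℂ) = (j : ℂ) * Real.pi := by push_cast; ring
    rw [one_mul, Complex.ofReal_cos, this, Complex.sin_int_mul_pi]
    simp
  · intro e
    rw [hS1 k hk, pow_succ' 2 (e+1), a, a, if_neg, if_neg, hG, sum_image_mul k hq0]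
    · push_cast; ring
    all_goals positivity

lemma exists_loc {p : ℕ} (hp : p.Prime) : ∃ θ ν c, Loc p θ ν c := by
  rcases hp.eq_two_or_odd with rfl | h
  · obtain ⟨θ, h⟩ := loc_two; exact ⟨θ, _, _, h⟩
  · have : p % 4 = 1 ∨ p % 4 = 3 := by omega
    rcases this with h | h
    · obtain ⟨θ, h⟩ := loc_one hp h; exact ⟨θ, _, _, h⟩
    · obtain ⟨θ, h⟩ := loc_three hp h; exact ⟨θ, _, _, h⟩

lemma norm_a_pow_le (k : ℤ) {p : ℕ} (hp : p.Prime) (e : ℕ) : ‖a k (p ^ e)‖ ≤ e + 1 := by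
  refine (norm_a_le k _).trans ?_
  obtain ⟨θ, ν, c, hνc, hloc⟩ := exists_loc hp
  obtain ⟨h1, h2⟩ := hloc 0 (by norm_num)
  have h0 : a 0 (p ^ 0) = 1 := by rw [pow_zero]; exact a_one (by norm_num)
  rcases hνc with ⟨rfl, rfl, -⟩ | ⟨rfl, rfl, -⟩ | ⟨rfl, rfl, -⟩
  · have : a 0 (p ^ e) = 1 ∧ a 0 (p ^ (e+1)) = 1 := by
      induction e with
      | zero => simp [h1, a_one]
      | succ e ih => refine ⟨ih.2, ?_⟩; rw [h2, ih.2, h1]; simp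
    rw [this.1]; simp
  · have : (a 0 (p ^ e)).re ≤ 1 ∧ (a 0 (p ^ (e+1))).re ≤ 1 := by
      induction e with
      | zero => simp [h1, a_one]
      | succ e ih => refine ⟨ih.2, ?_⟩; rw [h2, h1]; simpa using ih.1
    have h := this.1
    have : (0 : ℝ) ≤ e := by positivity
    linarith
  · have : a 0 (p ^ e) = e + 1 ∧ a 0 (p ^ (e+1)) = e + 2 := by
      induction e with
      | zero => simp [h1, a_one]
      | succ e ih =>
        refine ⟨?_, ?_⟩
        · rw [ih.2]; push_cast; ring
        · rw [h2, ih.2, ih.1, h1]; push_cast; simp; ring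
    rw [this.1]; simp
end LP

namespace LP
open GaussianInt MeasureTheory

noncomputable def Xi (k : ℤ) (z : ℂ) : ℂ := (z / (‖z‖ : ℂ)) ^ k

noncomputable def fl (z : ℂ) : GaussianInt := ⟨⌊z.re⌋, ⌊z.im⌋⟩

def Q (u : GaussianInt) : Set ℂ := {z | fl z = u}

lemma Q_eq (u : GaussianInt) : Q u = Complex.measurableEquivRealProd ⁻¹'
    (Set.Ico (u.re : ℝ) (u.re + 1) ×ˢ Set.Ico (u.im : ℝ) (u.im + 1)) := by
  ext z
  simp only [Q, fl, Set.mem_ofPred_eq, Zsqrtd.ext_iff, Int.floor_eq_iff, Set.mem_preimage,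
    Set.mem_prod, Set.mem_Ico]
  rfl

lemma measurableSet_Q (u : GaussianInt) : MeasurableSet (Q u) := by
  rw [Q_eq]
  exact Complex.measurableEquivRealProd.measurable (measurableSet_Ico.prod measurableSet_Ico)

lemma volume_Q (u : GaussianInt) : volume (Q u) = 1 := by
  rw [Q_eq, Complex.volume_preserving_equiv_real_prod.measure_preimage
    (measurableSet_Ico.prod measurableSet_Ico).nullMeasurableSet, Measure.volume_eq_prod, Measure.prod_prod]
  simp

lemma fl_dist (z : ℂ) : ‖z - (fl z : ℂ)‖ ≤ 2 := by
  refine (Complex.norm_le_abs_re_add_abs_im _).trans ?_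
  have h1 : (z - (fl z : ℂ)).re = Int.fract z.re := by
    simp [fl, GaussianInt.toComplex_def]
  have h2 : (z - (fl z : ℂ)).im = Int.fract z.im := by
    simp [fl, GaussianInt.toComplex_def]
  rw [h1, h2, abs_of_nonneg (Int.fract_nonneg _), abs_of_nonneg (Int.fract_nonneg _)]
  linarith [Int.fract_lt_one z.re, Int.fract_lt_one z.im]

lemma fl_sum (T : Finset GaussianInt) (g : GaussianInt → ℂ) :
    (fun z : ℂ => if fl z ∈ T then g (fl z) else 0) = fun z => ∑ u ∈ T, (Q u).indicator (fun _ => g u) z := by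
  classical
  funext z
  have : ∀ u, (Q u).indicator (fun _ => g u) z = if fl z = u then g (fl z) else 0 := by
    intro u
    by_cases h : fl z = u
    · rw [Set.indicator_of_mem (by exact h), if_pos h, h]
    · rw [Set.indicator_of_notMem (by exact h), if_neg h]
  simp [this]

lemma integrable_ind (u : GaussianInt) (c : ℂ) : Integrable ((Q u).indicator (fun _ => c)) := by
  apply (integrableOn_const (by rw [volume_Q]; simp)).integrable_indicator (measurableSet_Q u)

lemma integrable_fl (T : Finset GaussianInt) (g : GaussianInt → ℂ) :
    Integrable (fun z : ℂ => if fl z ∈ T then g (fl z) else 0) := by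
  rw [fl_sum]
  exact integrable_finsetSum _ (fun u _ => integrable_ind u _)

lemma integral_fl (T : Finset GaussianInt) (g : GaussianInt → ℂ) :
    ∫ z : ℂ, (if fl z ∈ T then g (fl z) else 0) = ∑ u ∈ T, g u := by
  rw [fl_sum, integral_finsetSum _ (fun u _ => integrable_ind u _)]
  apply Finset.sum_congr rfl
  intro u _
  rw [integral_indicator (measurableSet_Q u)]
  simp [Measure.real, volume_Q]

lemma norm_Xi_le (k : ℤ) (z : ℂ) : ‖Xi k z‖ ≤ 1 := by
  unfold Xi
  by_cases hz : z = 0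
  · subst hz
    by_cases hk : k = 0
    · simp [hk]
    · simp [zero_zpow k hk]
  · have : ‖z‖ ≠ 0 := by simpa using hz
    rw [norm_zpow, norm_div]
    simp [this]

lemma measurable_Xi (k : ℤ) : Measurable (Xi k) := by
  unfold Xi
  have h : Measurable (fun z : ℂ => z / (‖z‖ : ℂ)) := by fun_prop
  cases k with
  | ofNat n => simpa using h.pow_const n
  | negSucc n => simp only [zpow_negSucc]; exact (h.pow_const (n+1)).inv

lemma volreal_ball {r : ℝ} (hr : 0 ≤ r) : (volume (Metric.closedBall (0 : ℂ) r)).toReal = Real.pi * r ^ 2 := by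
  rw [Complex.volume_closedBall]
  simp [hr]
  ring

lemma integral_rot (k : ℤ) (hk : k ≠ 0) (R : ℝ) :
    ∫ z : ℂ, (Metric.closedBall (0 : ℂ) R).indicator (Xi k) z = 0 := by
  set α : Circle := Circle.exp (Real.pi / k) with hα
  have hαk : (α : ℂ) ^ k = -1 := by
    rw [hα, Circle.coe_exp, ← Complex.exp_int_mul]
    have : (k : ℂ) * (((Real.pi / k : ℝ) : ℂ) * Complex.I) = Real.pi * Complex.I := by
      have : (k : ℂ) ≠ 0 := by exact_mod_cast hk
      push_cast
      field_simp
    rw [this, Complex.exp_pi_mul_I]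
  have h := ((rotation α).measurePreserving).integral_comp
    (rotation α).toHomeomorph.measurableEmbedding ((Metric.closedBall (0 : ℂ) R).indicator (Xi k))
  have h2 : ∀ z, (Metric.closedBall (0 : ℂ) R).indicator (Xi k) (rotation α z) =
      - (Metric.closedBall (0 : ℂ) R).indicator (Xi k) z := by
    intro z
    have hn : ‖rotation α z‖ = ‖z‖ := LinearIsometryEquiv.norm_map _ _
    by_cases hz : z ∈ Metric.closedBall (0 : ℂ) R
    · rw [Set.indicator_of_mem hz, Set.indicator_of_mem]
      · unfold Xi
        rw [hn, rotation_apply, mul_div_assoc, mul_zpow, hαk]; ring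
      · rw [mem_closedBall_zero_iff] at hz ⊢; rwa [hn]
    · rw [Set.indicator_of_notMem hz, Set.indicator_of_notMem]
      · simp
      · rw [mem_closedBall_zero_iff] at hz ⊢; rwa [hn]
  simp_rw [h2] at h
  rw [integral_neg] at h
  exact self_eq_neg.mp h.symm

lemma pow_sub_le (n : ℕ) {x y : ℂ} (hx : ‖x‖ = 1) (hy : ‖y‖ = 1) : ‖x ^ n - y ^ n‖ ≤ n * ‖x - y‖ := by
  induction n with
  | zero => simp
  | succ n ih =>
    have : x ^ (n+1) - y ^ (n+1) = x ^ n * (x - y) + (x ^ n - y ^ n) * y := by ring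
    rw [this]
    refine (norm_add_le _ _).trans ?_
    rw [norm_mul, norm_mul, norm_pow, hx, hy]
    push_cast
    simp
    linarith

lemma zpow_sub_le (k : ℤ) {x y : ℂ} (hx : ‖x‖ = 1) (hy : ‖y‖ = 1) : ‖x ^ k - y ^ k‖ ≤ |(k : ℝ)| * ‖x - y‖ := by
  have hx0 : x ≠ 0 := by rintro rfl; simp at hx
  have hy0 : y ≠ 0 := by rintro rfl; simp at hy
  obtain ⟨n, rfl | rfl⟩ := Int.eq_nat_or_neg k
  · simpa using pow_sub_le n hx hy
  · rw [zpow_neg, zpow_neg, zpow_natCast, zpow_natCast, ← inv_pow, ← inv_pow]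
    refine (pow_sub_le n (by simp [hx]) (by simp [hy])).trans ?_
    rw [inv_sub_inv hx0 hy0, norm_div, norm_mul, hx, hy]
    simp [norm_sub_rev]

lemma Xi_sub_le (k : ℤ) {z w : ℂ} (hz : z ≠ 0) (hw : w ≠ 0) :
    ‖Xi k w - Xi k z‖ ≤ |(k : ℝ)| * (2 * ‖w - z‖ / ‖z‖) := by
  unfold Xi
  have hz' : 0 < ‖z‖ := norm_pos_iff.mpr hz
  have hw' : 0 < ‖w‖ := norm_pos_iff.mpr hw
  have hz'' : (‖z‖ : ℂ) ≠ 0 := by exact_mod_cast hz'.ne'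
  have hw'' : (‖w‖ : ℂ) ≠ 0 := by exact_mod_cast hw'.ne'
  refine (zpow_sub_le k ?_ ?_).trans ?_
  · simp [hw'.ne']
  · simp [hz'.ne']
  · gcongr
    have : w / (‖w‖ : ℂ) - z / (‖z‖ : ℂ) = ((w / ‖w‖) * ((‖z‖ - ‖w‖ : ℝ) : ℂ) + (w - z)) / ‖z‖ := by
      push_cast
      field_simp
      ring
    rw [this, norm_div]
    simp only [Complex.norm_real, norm_norm]
    gcongr
    refine (norm_add_le _ _).trans ?_
    rw [norm_mul, norm_div, Complex.norm_real, norm_norm, div_self hw'.ne', one_mul, Complex.norm_real]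
    have := abs_norm_sub_norm_le z w
    rw [norm_sub_rev] at this
    rw [Real.norm_eq_abs]
    linarith

noncomputable def TT (N : ℕ) : Finset GaussianInt := (Finset.Icc 1 N).biUnion G

lemma mem_TT {N : ℕ} {u : GaussianInt} : u ∈ TT N ↔ u ≠ 0 ∧ ‖(u : ℂ)‖ ≤ Real.sqrt N := by
  unfold TT
  simp only [Finset.mem_biUnion, Finset.mem_Icc, mem_G]
  have h1 : ‖(u : ℂ)‖ ≤ Real.sqrt N ↔ u.norm ≤ N := by
    rw [Real.le_sqrt (norm_nonneg _) (by positivity), ← Complex.normSq_eq_norm_sq,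
      ← GaussianInt.intCast_real_norm]
    exact_mod_cast Iff.rfl
  rw [h1, ← GaussianInt.norm_pos]
  constructor
  · rintro ⟨n, hn, h⟩; omega
  · rintro ⟨h, h'⟩
    exact ⟨u.norm.toNat, by omega, by omega⟩

lemma sum_TT (k : ℤ) (N : ℕ) : ∑ n ∈ Finset.Icc 1 N, a k n = (∑ u ∈ TT N, xi k u) / 4 := by
  unfold TT
  rw [Finset.sum_biUnion]
  · rw [Finset.sum_div]
    apply Finset.sum_congr rfl
    intro n hn
    rw [Finset.mem_Icc] at hn
    rw [a, if_neg (by omega)]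
  · intro x _ y _ hxy
    rw [Function.onFun, Finset.disjoint_left]
    intro u hu hu'
    rw [mem_G] at hu hu'
    rw [hu] at hu'
    exact hxy (by exact_mod_cast hu')

lemma pointwise (k : ℤ) (hk : k ≠ 0) (N : ℕ) (ρ : ℝ) (hρ : 2 < ρ) (z : ℂ) :
    ‖(if fl z ∈ TT N then xi k (fl z) else 0) -
      (Metric.closedBall (0 : ℂ) (Real.sqrt N)).indicator (Xi k) z‖ ≤
    (Metric.closedBall (0 : ℂ) ρ).indicator (fun _ => (2 : ℝ)) z +
    (Metric.closedBall (0 : ℂ) (Real.sqrt N + 2)).indicator (fun _ => (4 * |(k:ℝ)| / ρ : ℝ)) z +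
    ((Metric.closedBall (0 : ℂ) (Real.sqrt N + 2)).indicator (fun _ => (2 : ℝ)) z -
    (Metric.closedBall (0 : ℂ) (Real.sqrt N - 2)).indicator (fun _ => (2 : ℝ)) z) := by
  classical
  set R := Real.sqrt N
  have hd := fl_dist z
  have hd' : ‖(fl z : ℂ) - z‖ ≤ 2 := by rwa [norm_sub_rev]
  have hxi : xi k (fl z) = Xi k (fl z : ℂ) := rfl
  have t1 : ‖z‖ ≤ ‖(fl z : ℂ)‖ + 2 := by
    have := norm_sub_norm_le z (fl z : ℂ); linarith
  have t2 : ‖(fl z : ℂ)‖ ≤ ‖z‖ + 2 := by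
    have := norm_sub_norm_le (fl z : ℂ) z; linarith
  have hb : ‖(if fl z ∈ TT N then xi k (fl z) else 0) -
      (Metric.closedBall (0 : ℂ) R).indicator (Xi k) z‖ ≤ 2 := by
    refine (norm_sub_le _ _).trans ?_
    have h1 : ‖(if fl z ∈ TT N then xi k (fl z) else 0)‖ ≤ 1 := by
      split_ifs
      · exact norm_Xi_le _ _
      · simp
    have h2 : ‖(Metric.closedBall (0 : ℂ) R).indicator (Xi k) z‖ ≤ 1 :=
      (norm_indicator_le_norm_self _ _).trans (norm_Xi_le _ _)
    linarith
  have hpos : 0 ≤ 4 * |(k:ℝ)| / ρ := by positivity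
  simp only [Set.indicator_apply, Metric.mem_closedBall, dist_zero_right] at hb ⊢
  by_cases c1 : ‖z‖ ≤ R + 2
  swap
  · have e1 : fl z ∉ TT N := by
      rw [mem_TT]; rintro ⟨_, h⟩; exact c1 (by linarith)
    have e2 : ¬ ‖z‖ ≤ R := fun h => c1 (by linarith)
    have e3 : ¬ ‖z‖ ≤ R - 2 := fun h => c1 (by linarith)
    rw [if_neg e1, if_neg e2, if_neg c1, if_neg c1, if_neg e3]
    simp only [sub_self, norm_zero, add_zero]
    split_ifs <;> norm_num
  by_cases c2 : ‖z‖ ≤ ρ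
  · rw [if_pos c2, if_pos c1, if_pos c1]
    refine hb.trans ?_
    try split_ifs
    all_goals linarith
  by_cases c3 : ‖z‖ ≤ R - 2
  swap
  · rw [if_neg c3, if_pos c1, if_pos c1, if_neg c2]
    refine hb.trans ?_
    try split_ifs
    all_goals linarith
  · have hfl : fl z ≠ 0 := by
      intro h
      rw [h] at t1
      simp at t1
      push Not at c2
      linarith
    have e1 : fl z ∈ TT N := mem_TT.mpr ⟨hfl, by linarith⟩
    have e2 : ‖z‖ ≤ R := by linarith
    rw [if_pos e1, if_pos e2, if_neg c2, if_pos c1, if_pos c1, if_pos c3, hxi]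
    push Not at c2
    have hz : z ≠ 0 := by rintro rfl; simp at c2; linarith
    refine (Xi_sub_le k hz (by simpa using hfl)).trans ?_
    have : |(k:ℝ)| * (2 * ‖(fl z : ℂ) - z‖ / ‖z‖) ≤ |(k:ℝ)| * (2 * 2 / ρ) := by
      gcongr
    calc _ ≤ |(k:ℝ)| * (2 * 2 / ρ) := this
      _ = _ := by ring

lemma int_ball {r : ℝ} (hr : 0 ≤ r) (c : ℝ) :
    ∫ z : ℂ, (Metric.closedBall (0 : ℂ) r).indicator (fun _ => c) z = Real.pi * r ^ 2 * c := by
  rw [integral_indicator Metric.isClosed_closedBall.measurableSet]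
  rw [setIntegral_const, Measure.real, volreal_ball hr, smul_eq_mul]

lemma int_ball_nonneg (r : ℝ) (c : ℝ) (hc : 0 ≤ c) :
    0 ≤ ∫ z : ℂ, (Metric.closedBall (0 : ℂ) r).indicator (fun _ => c) z :=
  integral_nonneg (fun z => Set.indicator_nonneg (fun _ _ => hc) z)

lemma integrable_ball {E : Type*} [NormedAddCommGroup E] (r : ℝ) (c : E) :
    Integrable ((Metric.closedBall (0 : ℂ) r).indicator (fun _ => c)) := by
  apply (integrableOn_const measure_closedBall_lt_top.ne).integrable_indicator
    Metric.isClosed_closedBall.measurableSet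

lemma integrable_Xi (k : ℤ) (r : ℝ) : Integrable ((Metric.closedBall (0 : ℂ) r).indicator (Xi k)) := by
  refine (integrable_ball r (1:ℝ)).mono'
    ((measurable_Xi k).indicator Metric.isClosed_closedBall.measurableSet).aestronglyMeasurable ?_
  filter_upwards with z
  classical
  simp only [Set.indicator_apply]
  split_ifs
  · exact norm_Xi_le _ _
  · simp

lemma TT_bound (k : ℤ) (hk : k ≠ 0) (N : ℕ) (hN : 1 ≤ N) :
    ‖∑ u ∈ TT N, xi k u‖ ≤ 1000 * |(k : ℝ)| * (N : ℝ) ^ (3 / 4 : ℝ) := by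
  set R := Real.sqrt N with hR
  have hR1 : 1 ≤ R := by rw [hR]; exact Real.one_le_sqrt.mpr (by exact_mod_cast hN)
  set r := Real.sqrt R with hr
  have hr1 : 1 ≤ r := Real.one_le_sqrt.mpr hR1
  have hrR : r ^ 2 = R := Real.sq_sqrt (by linarith)
  have hN34 : (N : ℝ) ^ (3 / 4 : ℝ) = r ^ 3 := by
    have : (N : ℝ) = r ^ 4 := by
      calc (N : ℝ) = R ^ 2 := (Real.sq_sqrt (by positivity)).symm
        _ = r ^ 4 := by rw [← hrR]; ring
    rw [this, ← Real.rpow_natCast, ← Real.rpow_mul (by positivity), ← Real.rpow_natCast]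
    norm_num
  have hk1 : 1 ≤ |(k : ℝ)| := by exact_mod_cast Int.one_le_abs hk
  have h0 : ∑ u ∈ TT N, xi k u = ∫ z : ℂ, ((if fl z ∈ TT N then xi k (fl z) else 0) -
      (Metric.closedBall (0 : ℂ) R).indicator (Xi k) z) := by
    rw [integral_sub (integrable_fl _ _) (integrable_Xi k R), integral_fl, integral_rot k hk, sub_zero]
  rw [h0]
  refine (norm_integral_le_of_norm_le ?_ (Filter.Eventually.of_forall
    (pointwise k hk N (3 * r) (by linarith)))).trans ?_
  · exact ((integrable_ball _ _).add (integrable_ball _ _)).add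
      ((integrable_ball _ _).sub (integrable_ball _ _))
  · rw [integral_add, integral_add (integrable_ball _ _)
      (integrable_ball _ _), integral_sub (integrable_ball _ _) (integrable_ball _ _),
      int_ball (by linarith), int_ball (by linarith), int_ball (by linarith), hN34]
    have hpi := Real.pi_lt_four
    have hpi0 := Real.pi_pos
    have e1 : Real.pi * (3 * r) ^ 2 * 2 ≤ 72 * r ^ 3 := by
      have : r ^ 2 ≤ r ^ 3 := pow_le_pow_right₀ hr1 (by norm_num)
      calc Real.pi * (3 * r) ^ 2 * 2 = 18 * Real.pi * r ^ 2 := by ring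
        _ ≤ 18 * 4 * r ^ 3 := by gcongr
        _ = _ := by ring
    have e2 : Real.pi * (R + 2) ^ 2 * (4 * |(k : ℝ)| / (3 * r)) ≤ 72 * |(k : ℝ)| * r ^ 3 := by
      have : R + 2 ≤ 3 * r ^ 2 := by rw [hrR]; linarith
      calc Real.pi * (R + 2) ^ 2 * (4 * |(k : ℝ)| / (3 * r))
          ≤ 4 * (3 * r ^ 2) ^ 2 * (4 * |(k : ℝ)| / (3 * r)) := by gcongr
        _ = 48 * |(k : ℝ)| * r ^ 3 := by field_simp; ring
        _ ≤ _ := by gcongr; norm_num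
    have e3 : Real.pi * (R + 2) ^ 2 * 2 - ∫ z : ℂ, (Metric.closedBall (0 : ℂ) (R - 2)).indicator
        (fun _ => (2 : ℝ)) z ≤ 128 * r ^ 3 := by
      have hRr : R ≤ r ^ 3 := by rw [← hrR]; exact pow_le_pow_right₀ hr1 (by norm_num)
      by_cases h2 : 2 ≤ R
      · rw [int_ball (by linarith)]
        calc _ = 16 * Real.pi * R := by ring
          _ ≤ 16 * 4 * r ^ 3 := by gcongr
          _ ≤ _ := by nlinarith [pow_pos (by linarith : 0 < r) 3]
      · have := int_ball_nonneg (R - 2) 2 (by norm_num)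
        have : (R + 2) ^ 2 ≤ 16 := by nlinarith
        have : Real.pi * (R + 2) ^ 2 * 2 ≤ 128 := by nlinarith
        have : 1 ≤ r ^ 3 := one_le_pow₀ hr1
        linarith
    have e4 : r ^ 3 ≤ |(k : ℝ)| * r ^ 3 := le_mul_of_one_le_left (by positivity) hk1
    have : 0 ≤ |(k : ℝ)| * r ^ 3 := by positivity
    linarith
    · exact (integrable_ball _ _).add (integrable_ball _ _)
    · exact (integrable_ball _ _).sub (integrable_ball _ _)

lemma A_bound (k : ℤ) (hk : k ≠ 0) (N : ℕ) :
    ‖∑ n ∈ Finset.Icc 1 N, a k n‖ ≤ 250 * |(k : ℝ)| * (N : ℝ) ^ (3 / 4 : ℝ) := by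
  rcases Nat.eq_zero_or_pos N with rfl | hN
  · simp
  · rw [sum_TT, norm_div]
    have := TT_bound k hk N hN
    simp only [Complex.norm_ofNat]
    linarith

lemma card_TT_eq (N : ℕ) : ((TT N).card : ℂ) = ∫ z : ℂ, (if fl z ∈ TT N then (1 : ℂ) else 0) := by
  rw [integral_fl (TT N) (fun _ => 1)]; simp

lemma card_TT_upper (N : ℕ) (hN : 1 ≤ N) : ((TT N).card : ℝ) ≤ 36 * N := by
  have hR1 : 1 ≤ Real.sqrt N := Real.one_le_sqrt.mpr (by exact_mod_cast hN)
  have h := congrArg norm (card_TT_eq N)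
  rw [Complex.norm_natCast] at h
  rw [h]
  refine (norm_integral_le_of_norm_le (integrable_ball (Real.sqrt N + 2) (1 : ℝ))
    (Filter.Eventually.of_forall ?_)).trans ?_
  · intro z
    classical
    simp only [Set.indicator_apply, Metric.mem_closedBall, dist_zero_right]
    have hd := fl_dist z
    have := norm_sub_norm_le z (fl z : ℂ)
    split_ifs with h1 h2 h2
    · simp
    · rw [mem_TT] at h1
      exact absurd (by linarith) h2
    · simp
    · simp
  · rw [int_ball (by linarith)]
    have : (N : ℝ) = Real.sqrt N ^ 2 := (Real.sq_sqrt (by positivity)).symm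
    have hpi := Real.pi_lt_four
    have : (Real.sqrt N + 2) ^ 2 ≤ 9 * Real.sqrt N ^ 2 := by nlinarith
    simp only [mul_one]
    calc Real.pi * (√N + 2) ^ 2 ≤ 4 * (9 * Real.sqrt N ^ 2) := by gcongr
      _ = _ := by rw [Real.sq_sqrt (by positivity)]; ring

lemma card_TT_lower (N : ℕ) (hN : 1 ≤ N) : (N : ℝ) / 36 ≤ (TT N).card := by
  set R := Real.sqrt N with hR
  have hR1 : 1 ≤ R := Real.one_le_sqrt.mpr (by exact_mod_cast hN)
  have hNR : (N : ℝ) = R ^ 2 := (Real.sq_sqrt (by positivity)).symm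
  have h4 : (4 : ℝ) ≤ (TT N).card := by
    have : G 1 ⊆ TT N := Finset.subset_biUnion_of_mem G (Finset.mem_Icc.mpr ⟨le_rfl, hN⟩)
    have := Finset.card_le_card this
    rw [card_G_one] at this
    exact_mod_cast this
  by_cases h : R ≤ 6
  · rw [hNR]; nlinarith
  push Not at h
  have key : Real.pi * (R - 2) ^ 2 ≤ (TT N).card + 1 := by
    have e : ((TT N).card : ℝ) + 1 = ∫ z : ℂ, ((if fl z ∈ TT N then (1 : ℂ) else 0) +
        (Q 0).indicator (fun _ => 1) z).re := by
      have : (((TT N).card : ℝ) + 1 : ℂ) = ∫ z : ℂ, ((if fl z ∈ TT N then (1 : ℂ) else 0) +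
        (Q 0).indicator (fun _ => 1) z) := by
        rw [integral_add (integrable_fl (TT N) (fun _ => 1)) (integrable_ind 0 1), ← card_TT_eq,
          integral_indicator (measurableSet_Q 0)]
        simp [Measure.real, volume_Q]
      have h2 := congrArg Complex.re this
      rw [← RCLike.re_eq_complex_re, ← integral_re, ] at h2
      · simpa using h2
      · exact (integrable_fl (TT N) (fun _ => 1)).add (integrable_ind 0 1)
    rw [e, ← mul_one (Real.pi * _), ← int_ball (by linarith)]
    apply integral_mono (integrable_ball _ _)
    · exact ((integrable_fl (TT N) (fun _ => 1)).add (integrable_ind 0 1)).re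
    · intro z
      classical
      simp only [Set.indicator_apply, Metric.mem_closedBall, dist_zero_right]
      have hd := fl_dist z
      rw [norm_sub_rev] at hd
      have := norm_sub_norm_le (fl z : ℂ) z
      have hq : z ∈ Q 0 ↔ fl z = 0 := Iff.rfl
      rw [hq]
      split_ifs with h1 h2 h3 h3 h4 h4 <;> simp
      exact absurd (mem_TT.mpr ⟨h3, by linarith⟩) h2
  have hpi := Real.pi_gt_three
  have : 3 * (R - 2) ^ 2 ≤ Real.pi * (R - 2) ^ 2 := by gcongr
  rw [hNR]
  nlinarith

lemma a0_re_cast (n : ℕ) : a 0 n = ((a 0 n).re : ℂ) := by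
  by_cases hn : n = 0
  · simp [a, hn]
  · rw [a_zero_eq n hn]
    rw [show (((G n).card : ℂ) / 4) = (((G n).card / 4 : ℝ) : ℂ) by push_cast; rfl]
    simp

lemma a0_nonneg (n : ℕ) : 0 ≤ (a 0 n).re := (_root_.norm_nonneg _).trans (norm_a_le 0 n)

lemma sum_a0 (N : ℕ) : ∑ n ∈ Finset.Icc 1 N, (a 0 n).re = ((TT N).card : ℝ) / 4 := by
  have h := sum_TT 0 N
  simp only [xi_zero', Finset.sum_const, nsmul_eq_mul, mul_one] at h
  have h2 := congrArg Complex.re h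
  rw [Complex.re_sum] at h2
  rw [h2, show (((TT N).card : ℂ) / 4) = (((TT N).card / 4 : ℝ) : ℂ) by push_cast; rfl]
  simp

lemma A0_upper (N : ℕ) : ∑ n ∈ Finset.Icc 1 N, (a 0 n).re ≤ 9 * N := by
  rcases Nat.eq_zero_or_pos N with rfl | hN
  · simp
  · rw [sum_a0]; linarith [card_TT_upper N hN]

lemma A0_lower (N : ℕ) : (N : ℝ) / 144 ≤ ∑ n ∈ Finset.Icc 1 N, (a 0 n).re := by
  rcases Nat.eq_zero_or_pos N with rfl | hN
  · simp
  · rw [sum_a0]; linarith [card_TT_lower N hN]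

end LP

namespace LP
open Filter Asymptotics MeasureTheory Topology

lemma a_norm_bigO (k : ℤ) : (fun n : ℕ ↦ ∑ j ∈ Finset.Icc 1 n, ‖a k j‖) =O[atTop]
    fun n ↦ (n : ℝ) ^ (1 : ℝ) := by
  refine IsBigO.of_bound 9 (Eventually.of_forall fun n => ?_)
  rw [Real.rpow_one, Real.norm_of_nonneg (Finset.sum_nonneg fun _ _ => _root_.norm_nonneg _),
    Real.norm_of_nonneg (by positivity)]
  exact (Finset.sum_le_sum fun j _ => norm_a_le k j).trans (A0_upper n)

lemma a_summable (k : ℤ) {s : ℂ} (hs : 1 < s.re) : LSeriesSummable (a k) s :=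
  LSeriesSummable_of_sum_norm_bigO (a_norm_bigO k) zero_le_one hs

noncomputable def AA (k : ℤ) (t : ℝ) : ℂ := ∑ n ∈ Finset.Icc 1 ⌊t⌋₊, a k n

noncomputable def F (k : ℤ) (s : ℂ) : ℂ :=
  s * ∫ t in Set.Ioi (1 : ℝ), AA k t * (t : ℂ) ^ (-(s + 1))

lemma F_eq (k : ℤ) {s : ℂ} (hs : 1 < s.re) : F k s = LSeries (a k) s :=
  (LSeries_eq_mul_integral' _ zero_le_one hs (a_norm_bigO k)).symm

lemma AA_bound (k : ℤ) (hk : k ≠ 0) {t : ℝ} (ht : 0 ≤ t) :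
    ‖AA k t‖ ≤ 250 * |(k : ℝ)| * t ^ (3 / 4 : ℝ) := by
  refine (A_bound k hk _).trans ?_
  gcongr
  exact Nat.floor_le ht

lemma AA_meas (k : ℤ) : Measurable (AA k) := by
  unfold AA
  exact (measurable_from_nat (f := fun N => ∑ n ∈ Finset.Icc 1 N, a k n)).comp Nat.measurable_floor

lemma norm_cpow_neg {t : ℝ} (ht : 0 < t) (s : ℂ) : ‖(t : ℂ) ^ (-(s + 1))‖ = t ^ (-(s.re + 1)) := by
  rw [Complex.norm_cpow_eq_rpow_re_of_pos ht]; simp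

lemma F_bound (k : ℤ) (hk : k ≠ 0) {s : ℂ} (hs : 3 / 4 < s.re) :
    ‖F k s‖ ≤ ‖s‖ * (250 * |(k : ℝ)| / (s.re - 3 / 4)) := by
  unfold F
  rw [norm_mul]
  gcongr
  have hi : IntegrableOn (fun t : ℝ => 250 * |(k : ℝ)| * t ^ (-(s.re + 1 / 4))) (Set.Ioi 1) :=
    (integrableOn_Ioi_rpow_of_lt (by linarith) zero_lt_one).const_mul _
  refine (norm_integral_le_of_norm_le hi ?_).trans ?_
  · refine (ae_restrict_iff' measurableSet_Ioi).mpr (Eventually.of_forall fun t ht => ?_)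
    have ht0 : (0 : ℝ) < t := zero_lt_one.trans ht
    rw [norm_mul, norm_cpow_neg ht0]
    calc _ ≤ 250 * |(k : ℝ)| * t ^ (3 / 4 : ℝ) * t ^ (-(s.re + 1)) := by
          gcongr; exact AA_bound k hk ht0.le
      _ = _ := by rw [mul_assoc, ← Real.rpow_add ht0]; ring_nf
  · rw [integral_const_mul, integral_Ioi_rpow_of_lt (by linarith) zero_lt_one]
    rw [Real.one_rpow]
    apply le_of_eq
    have h1 : s.re - 3 / 4 ≠ 0 := by linarith
    have h2 : -(s.re + 1 / 4) + 1 = -(s.re - 3 / 4) := by ring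
    rw [h2, neg_div_neg_eq]
    ring

lemma F_diff (k : ℤ) (hk : k ≠ 0) {s : ℂ} (hs : 3 / 4 < s.re) : DifferentiableAt ℂ (F k) s := by
  set f : ℝ → ℂ := (Set.Ioi (1 : ℝ)).indicator (AA k) with hf
  have hfb : ∀ t, ‖f t‖ ≤ 250 * |(k : ℝ)| * |t| ^ (3 / 4 : ℝ) := by
    intro t
    classical
    rw [hf, Set.indicator_apply]
    split_ifs with h
    · have ht0 : (0 : ℝ) < t := zero_lt_one.trans h
      rw [abs_of_pos ht0]
      exact AA_bound k hk ht0.le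
    · rw [norm_zero]; positivity
  have hmel : ∀ z : ℂ, F k z = z * mellin f (-z) := by
    intro z
    unfold F mellin
    congr 1
    have : ∀ t : ℝ, (t : ℂ) ^ (-z - 1) • f t =
        (Set.Ioi (1 : ℝ)).indicator (fun t : ℝ => AA k t * (t : ℂ) ^ (-(z + 1))) t := by
      intro t
      classical
      rw [hf, Set.indicator_apply, Set.indicator_apply]
      split_ifs
      · rw [smul_eq_mul, mul_comm]; congr 2; ring
      · simp
    simp_rw [this]
    rw [setIntegral_indicator measurableSet_Ioi]
    congr 2
    ext t; simp; try (intro h; linarith)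
  have hd : DifferentiableAt ℂ (mellin f) (-s) := by
    refine mellin_differentiableAt_of_isBigO_rpow (a := -(3/4)) (b := (-s).re - 1) ?_ ?_ ?_ ?_ ?_
    · refine LocallyIntegrable.locallyIntegrableOn ?_ _
      have hc : Continuous fun t : ℝ => 250 * |(k : ℝ)| * |t| ^ (3 / 4 : ℝ) := by
        refine continuous_const.mul (continuous_abs.rpow_const fun x => Or.inr (by norm_num))
      refine (hc.locallyIntegrable).mono
        ((AA_meas k).indicator measurableSet_Ioi).aestronglyMeasurable (Eventually.of_forall fun t => ?_)
      exact (hfb t).trans (Real.le_norm_self _)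
    · refine IsBigO.of_bound (250 * |(k : ℝ)|) ?_
      filter_upwards [eventually_gt_atTop 0] with t ht
      refine (hfb t).trans ?_
      rw [neg_neg, abs_of_pos ht, Real.norm_of_nonneg (by positivity)]
    · simp; linarith
    · refine IsBigO.of_bound 1 ?_
      filter_upwards [Ioo_mem_nhdsGT (zero_lt_one (α := ℝ))] with t ht
      have : f t = 0 := by
        rw [hf]; exact Set.indicator_of_notMem (by simp; exact ht.2.le) _
      rw [this, norm_zero]; positivity
    · linarith
  have : F k = fun z => z * mellin f (-z) := funext hmel
  rw [this]
  refine differentiableAt_id.mul ?_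
  exact DifferentiableAt.comp (g := mellin f) (f := fun z : ℂ => -z) s hd differentiableAt_id.neg

lemma L0_eq {σ : ℝ} (hσ : 1 < σ) : ∃ r : ℝ, LSeries (a 0) σ = r ∧ 1 / (288 * (σ - 1)) ≤ r ∧
    r ≤ 9 * σ / (σ - 1) := by
  set B : ℝ → ℝ := fun t => ∑ n ∈ Finset.Icc 1 ⌊t⌋₊, (a 0 n).re
  have hB : ∀ t, AA 0 t = (B t : ℂ) := by
    intro t
    simp only [AA, B]
    push_cast
    exact Finset.sum_congr rfl fun n _ => a0_re_cast n
  have hBm : Measurable B := by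
    exact (measurable_from_nat (f := fun N => ∑ n ∈ Finset.Icc 1 N, (a 0 n).re)).comp Nat.measurable_floor
  have hB0 : ∀ t, 0 ≤ B t := fun t => Finset.sum_nonneg fun n _ => a0_nonneg n
  have hBu : ∀ t, 1 < t → B t ≤ 9 * t := fun t ht => (A0_upper _).trans (by
    gcongr; exact Nat.floor_le (by linarith))
  have hBl : ∀ t : ℝ, 1 < t → t / 288 ≤ B t := by
    intro t ht
    refine le_trans ?_ (A0_lower _)
    have h1 : 1 ≤ ⌊t⌋₊ := Nat.one_le_floor_iff _ |>.mpr ht.le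
    have h1 : (1 : ℝ) ≤ ⌊t⌋₊ := by exact_mod_cast h1
    have h2 := Nat.lt_floor_add_one t
    linarith
  have hexp : ∀ t : ℝ, 1 < t → (t : ℂ) ^ (-((σ : ℂ) + 1)) = ((t ^ (-(σ + 1)) : ℝ) : ℂ) := by
    intro t ht
    rw [Complex.ofReal_cpow (by linarith)]; push_cast; rfl
  have hIntegral : ∫ t in Set.Ioi (1 : ℝ), AA 0 t * (t : ℂ) ^ (-((σ : ℂ) + 1)) =
      ((∫ t in Set.Ioi (1 : ℝ), B t * t ^ (-(σ + 1)) : ℝ) : ℂ) := by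
    rw [← integral_complex_ofReal]
    refine setIntegral_congr_fun measurableSet_Ioi fun t ht => ?_
    beta_reduce
    rw [hB, hexp t ht]; push_cast; rfl
  have hmul : ∀ t : ℝ, 1 < t → t * t ^ (-(σ + 1)) = t ^ (-σ) := by
    intro t ht
    have : (0:ℝ) < t := by linarith
    nth_rewrite 1 [← Real.rpow_one t]
    rw [← Real.rpow_add this]; ring_nf
  have hr : IntegrableOn (fun t : ℝ => t ^ (-σ)) (Set.Ioi 1) :=
    integrableOn_Ioi_rpow_of_lt (by linarith) zero_lt_one
  have hrv : ∫ t in Set.Ioi (1 : ℝ), t ^ (-σ) = 1 / (σ - 1) := by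
    rw [integral_Ioi_rpow_of_lt (by linarith) zero_lt_one, Real.one_rpow, neg_div, ← div_neg]
    congr 1; ring
  have hup : ∀ t ∈ Set.Ioi (1 : ℝ), B t * t ^ (-(σ + 1)) ≤ 9 * t ^ (-σ) := by
    intro t ht
    have ht' : (1:ℝ) < t := ht
    rw [← hmul t ht, ← mul_assoc]
    gcongr
    exact hBu t ht
  have hlo : ∀ t ∈ Set.Ioi (1 : ℝ), (1 / 288) * t ^ (-σ) ≤ B t * t ^ (-(σ + 1)) := by
    intro t ht
    have ht' : (1:ℝ) < t := ht
    rw [← hmul t ht, ← mul_assoc]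
    gcongr
    have := hBl t ht; linarith
  have hBi : IntegrableOn (fun t => B t * t ^ (-(σ + 1))) (Set.Ioi 1) := by
    refine Integrable.mono' (hr.const_mul 9) (hBm.mul (by fun_prop)).aestronglyMeasurable ?_
    refine (ae_restrict_iff' measurableSet_Ioi).mpr (Eventually.of_forall fun t ht => ?_)
    have ht' : (1:ℝ) < t := ht
    rw [Real.norm_of_nonneg (mul_nonneg (hB0 t) (by positivity))]
    exact hup t ht
  refine ⟨σ * ∫ t in Set.Ioi (1 : ℝ), B t * t ^ (-(σ + 1)), ?_, ?_, ?_⟩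
  · rw [← F_eq 0 (by simpa using hσ)]
    unfold F
    rw [hIntegral]; push_cast; rfl
  · have := setIntegral_mono_on (hr.const_mul (1/288)) hBi measurableSet_Ioi hlo
    rw [integral_const_mul, hrv] at this
    have h2 : 1 / (288 * (σ - 1)) = 1 / 288 * (1 / (σ - 1)) := by
      rw [div_mul_div_comm, mul_one]
    rw [h2]
    refine this.trans ?_
    have h3 : 0 ≤ ∫ t in Set.Ioi (1 : ℝ), B t * t ^ (-(σ + 1)) := by
      refine le_trans ?_ this
      have : 0 < σ - 1 := by linarith
      positivity
    nlinarith
  · have := setIntegral_mono_on hBi (hr.const_mul 9) measurableSet_Ioi hup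
    rw [integral_const_mul, hrv] at this
    calc _ ≤ σ * (9 * (1 / (σ - 1))) := by gcongr
      _ = _ := by ring

end LP

namespace LP
open Filter Topology

lemma natpow_cpow (p e : ℕ) (s : ℂ) : ((p ^ e : ℕ) : ℂ) ^ s = ((p : ℂ) ^ s) ^ e := by
  induction e with
  | zero => simp
  | succ e ih => rw [pow_succ, pow_succ, ← ih, Nat.cast_mul, Complex.natCast_mul_natCast_cpow]

lemma term_pow (k : ℤ) {p : ℕ} (hp : p.Prime) (s : ℂ) (e : ℕ) :
    LSeries.term (a k) s (p ^ e) = a k (p ^ e) * ((p : ℂ) ^ (-s)) ^ e := by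
  rw [LSeries.term_of_ne_zero (pow_ne_zero _ hp.ne_zero), natpow_cpow, Complex.cpow_neg, inv_pow,
    div_eq_mul_inv]

lemma norm_pcpow {p : ℕ} (hp : p.Prime) (s : ℂ) : ‖(p : ℂ) ^ (-s)‖ = (p : ℝ) ^ (-s.re) := by
  rw [Complex.norm_natCast_cpow_of_pos hp.pos]; simp

lemma rpow_neg_le_inv {p : ℕ} (hp : p.Prime) {σ : ℝ} (hσ : 1 ≤ σ) : (p : ℝ) ^ (-σ) ≤ (p : ℝ)⁻¹ := by
  rw [← Real.rpow_neg_one]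
  exact Real.rpow_le_rpow_of_exponent_le (by exact_mod_cast hp.one_lt.le) (by linarith)

noncomputable def th (p : Nat.Primes) : ℝ := (exists_loc p.2).choose
noncomputable def nu (p : Nat.Primes) : ℝ := (exists_loc p.2).choose_spec.choose
noncomputable def cc (p : Nat.Primes) : ℝ := (exists_loc p.2).choose_spec.choose_spec.choose
lemma loc_spec (p : Nat.Primes) : Loc p (th p) (nu p) (cc p) :=
  (exists_loc p.2).choose_spec.choose_spec.choose_spec

noncomputable def ap (k : ℤ) (p : Nat.Primes) : ℝ := nu p * Real.cos (k * th p)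

lemma a_prime {k : ℤ} (hk : 4 ∣ k) (p : Nat.Primes) : a k p = (ap k p : ℂ) :=
  ((loc_spec p).2 k hk).1

lemma nu_nonneg (p : Nat.Primes) : 0 ≤ nu p := by
  rcases (loc_spec p).1 with h | h | h <;> rw [h.1] <;> norm_num

lemma nu_le (p : Nat.Primes) : nu p ≤ 2 := by
  rcases (loc_spec p).1 with h | h | h <;> rw [h.1] <;> norm_num

lemma ap_zero (p : Nat.Primes) : ap 0 p = nu p := by simp [ap]

lemma abs_ap_le_nu (k : ℤ) (p : Nat.Primes) : |ap k p| ≤ nu p := by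
  rw [ap, abs_mul, abs_of_nonneg (nu_nonneg p)]
  exact mul_le_of_le_one_right (nu_nonneg p) (Real.abs_cos_le_one _)

lemma abs_ap_le (k : ℤ) (p : Nat.Primes) : |ap k p| ≤ 2 := (abs_ap_le_nu k p).trans (nu_le p)

noncomputable def ww (k : ℤ) (s : ℂ) (p : Nat.Primes) : ℂ :=
  ap k p * ((p : ℕ) : ℂ) ^ (-s) - cc p * (((p : ℕ) : ℂ) ^ (-s)) ^ 2

lemma local_bounds (k : ℤ) {s : ℂ} (hs : 1 < s.re) (p : Nat.Primes) :
    ‖ww k s p‖ ≤ 1 / 2 ∧ ‖ww k s p‖ ≤ 5 / 2 * ((p : ℕ) : ℝ)⁻¹ ∧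
      ‖ww k s p - ap k p * ((p : ℕ) : ℂ) ^ (-s)‖ ≤ (((p : ℕ) : ℝ)⁻¹) ^ 2 := by
  set y : ℝ := ((p : ℕ) : ℝ)⁻¹ with hy
  have hx : ‖((p : ℕ) : ℂ) ^ (-s)‖ ≤ y := by
    rw [norm_pcpow p.2]; exact rpow_neg_le_inv p.2 hs.le
  set x := ((p : ℕ) : ℂ) ^ (-s) with hxd
  have hy0 : 0 < y := by rw [hy]; have := p.2.pos; positivity
  have hw : ‖ww k s p‖ ≤ nu p * y + |cc p| * y ^ 2 := by
    rw [ww]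
    refine (norm_sub_le _ _).trans ?_
    rw [norm_mul, norm_mul, norm_pow, Complex.norm_real, Complex.norm_real, Real.norm_eq_abs,
      Real.norm_eq_abs]
    have := abs_ap_le_nu k p
    have := nu_nonneg p
    gcongr
  have hy' : ∀ m : ℕ, 0 < m → m ≤ (p : ℕ) → y ≤ (m : ℝ)⁻¹ := by
    intro m hm h
    rw [hy]
    have hm' : (0:ℝ) < m := by exact_mod_cast hm
    exact inv_anti₀ hm' (by exact_mod_cast h)
  have hd : ‖ww k s p - ap k p * x‖ = |cc p| * ‖x‖ ^ 2 := by
    rw [ww, sub_sub_cancel_left, norm_neg, norm_mul, norm_pow, Complex.norm_real, Real.norm_eq_abs]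
  have hxx : ‖x‖ ^ 2 ≤ y ^ 2 := by gcongr
  rw [hd]
  rcases (loc_spec p).1 with ⟨h1, h2, h3⟩ | ⟨h1, h2, h3⟩ | ⟨h1, h2, h3⟩ <;> rw [h1, h2] at hw <;>
    rw [h2]
  · have := hy' 2 (by norm_num) h3
    norm_num at this hw ⊢
    exact ⟨by linarith, by linarith, by positivity⟩
  · have := hy' 3 (by norm_num) h3
    norm_num at this hw ⊢
    exact ⟨by nlinarith, by nlinarith, hxx⟩
  · have := hy' 5 (by norm_num) h3
    norm_num at this hw ⊢
    exact ⟨by nlinarith, by nlinarith, hxx⟩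

lemma local_factor {k : ℤ} (hk : 4 ∣ k) {s : ℂ} (hs : 1 < s.re) (p : Nat.Primes) :
    ∑' e : ℕ, LSeries.term (a k) s ((p : ℕ) ^ e) = (1 - ww k s p)⁻¹ := by
  have hsum : Summable fun e : ℕ => LSeries.term (a k) s ((p : ℕ) ^ e) :=
    (a_summable k hs).comp_injective (Nat.pow_right_injective p.2.two_le)
  set x := ((p : ℕ) : ℂ) ^ (-s) with hxd
  set u : ℕ → ℂ := fun e => LSeries.term (a k) s ((p : ℕ) ^ e) with hu
  have hue : ∀ e, u e = a k ((p : ℕ) ^ e) * x ^ e := fun e => term_pow k p.2 s e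
  have hrec : ∀ e, u (e + 2) = ap k p * x * u (e + 1) - cc p * x ^ 2 * u e := by
    intro e
    rw [hue, hue, hue, ((loc_spec p).2 k hk).2 e, a_prime hk]
    ring
  have h0 : u 0 = 1 := by rw [hue]; simp [a_one hk]
  have h1 : u 1 = ap k p * x := by rw [hue]; simp [a_prime hk]
  have e0 := hsum.tsum_eq_zero_add
  have hs1 : Summable fun e => u (e + 1) := (summable_nat_add_iff 1).mpr hsum
  have e1 := hs1.tsum_eq_zero_add
  have e2 : ∑' e, u (e + 1 + 1) = ap k p * x * ∑' e, u (e + 1) - cc p * x ^ 2 * ∑' e, u e := by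
    rw [← tsum_mul_left, ← tsum_mul_left, ← (hs1.mul_left _).tsum_sub (hsum.mul_left _)]
    exact tsum_congr hrec
  have hw : ww k s p = ap k p * x - cc p * x ^ 2 := rfl
  have key : (∑' e, u e) * (1 - ww k s p) = 1 := by
    rw [h0] at e0
    simp only [zero_add] at e1
    rw [h1, e2] at e1
    rw [hw]
    linear_combination e0 + e1 - (ap k p : ℂ) * x * e0
  exact eq_inv_of_mul_eq_one_left key

lemma summable_inv_sq : Summable fun p : Nat.Primes => (((p : ℕ) : ℝ)⁻¹) ^ 2 := by
  have := (Nat.Primes.summable_rpow (r := -2)).mpr (by norm_num)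
  refine this.congr fun p => ?_
  rw [Real.rpow_neg (by positivity), inv_pow]; norm_num

noncomputable def C0 : ℝ := ∑' p : Nat.Primes, 8 * (((p : ℕ) : ℝ)⁻¹) ^ 2

lemma C0_nonneg : 0 ≤ C0 := tsum_nonneg fun p => by positivity

/-- real part of the prime sum -/
noncomputable def PR (k : ℤ) (s : ℂ) : ℝ := ∑' p : Nat.Primes, ((ap k p : ℂ) * ((p : ℕ) : ℂ) ^ (-s)).re

lemma summable_ap (k : ℤ) {s : ℂ} (hs : 1 < s.re) :
    Summable fun p : Nat.Primes => (ap k p : ℂ) * ((p : ℕ) : ℂ) ^ (-s) := by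
  refine Summable.of_norm_bounded (((Nat.Primes.summable_rpow (r := -s.re)).mpr (by linarith)).mul_left 2)
    fun p => ?_
  rw [norm_mul, norm_pcpow p.2, Complex.norm_real, Real.norm_eq_abs]
  gcongr
  exact abs_ap_le k p

lemma summable_ap_re (k : ℤ) {s : ℂ} (hs : 1 < s.re) :
    Summable fun p : Nat.Primes => ((ap k p : ℂ) * ((p : ℕ) : ℂ) ^ (-s)).re :=
  (Complex.hasSum_re (summable_ap k hs).hasSum).summable

lemma logL {k : ℤ} (hk : 4 ∣ k) {s : ℂ} (hs : 1 < s.re) :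
    LSeries (a k) s ≠ 0 ∧ |Real.log ‖LSeries (a k) s‖ - PR k s| ≤ C0 := by
  set l : Nat.Primes → ℂ := fun p => Complex.log (1 - ww k s p)⁻¹ with hl
  have hb : ∀ p : Nat.Primes, ‖l p - ap k p * ((p : ℕ) : ℂ) ^ (-s)‖ ≤ 8 * (((p : ℕ) : ℝ)⁻¹) ^ 2 := by
    intro p
    obtain ⟨h1, h2, h3⟩ := local_bounds k hs p
    have h4 := Complex.norm_log_one_sub_inv_sub_self_le (z := ww k s p) (by linarith)
    have h5 : (1 - ‖ww k s p‖)⁻¹ ≤ 2 := by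
      rw [inv_le_comm₀ (by linarith) (by norm_num)]; linarith
    have h6 : ‖ww k s p‖ ^ 2 ≤ (5 / 2 * ((p : ℕ) : ℝ)⁻¹) ^ 2 := by gcongr
    have h50 : 0 ≤ (1 - ‖ww k s p‖)⁻¹ := inv_nonneg.mpr (by linarith)
    have h7 : ‖ww k s p‖ ^ 2 * (1 - ‖ww k s p‖)⁻¹ / 2 ≤ (5 / 2 * ((p : ℕ) : ℝ)⁻¹) ^ 2 * 2 / 2 := by
      gcongr
    calc _ = ‖(l p - ww k s p) + (ww k s p - ap k p * ((p : ℕ) : ℂ) ^ (-s))‖ := by ring_nf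
      _ ≤ _ := norm_add_le _ _
      _ ≤ (5 / 2 * ((p : ℕ) : ℝ)⁻¹) ^ 2 * 2 / 2 + (((p : ℕ) : ℝ)⁻¹) ^ 2 := add_le_add (h4.trans h7) h3
      _ ≤ _ := by nlinarith [sq_nonneg (((p : ℕ) : ℝ)⁻¹)]
  have hds : Summable fun p => l p - ap k p * ((p : ℕ) : ℂ) ^ (-s) :=
    Summable.of_norm_bounded (summable_inv_sq.mul_left 8) hb
  have hls : Summable l := by
    have := hds.add (summable_ap k hs)
    simpa using this
  have hprod : HasProd (fun p : Nat.Primes => ∑' e : ℕ, LSeries.term (a k) s ((p : ℕ) ^ e))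
      (LSeries (a k) s) := by
    refine EulerProduct.eulerProduct_hasProd ?_ ?_ (a_summable k hs).norm (by simp)
    · rw [LSeries.term_of_ne_zero one_ne_zero]; simp [a_one hk]
    · intro m n hmn
      rcases eq_or_ne m 0 with rfl | hm
      · simp
      rcases eq_or_ne n 0 with rfl | hn
      · simp
      rw [LSeries.term_of_ne_zero (mul_ne_zero hm hn), LSeries.term_of_ne_zero hm,
        LSeries.term_of_ne_zero hn, a_mul k hmn, Nat.cast_mul, Complex.natCast_mul_natCast_cpow]
      rw [mul_div_mul_comm]
  have hexp : HasProd (fun p : Nat.Primes => ∑' e : ℕ, LSeries.term (a k) s ((p : ℕ) ^ e))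
      (Complex.exp (∑' p, l p)) := by
    convert hls.hasSum.cexp using 2 with p
    rw [local_factor hk hs, Function.comp, hl, Complex.exp_log]
    have h1 := (local_bounds k hs p).1
    refine inv_ne_zero fun h => ?_
    rw [← sub_eq_zero.mp h] at h1
    norm_num at h1
  have hL := hprod.unique hexp
  refine ⟨hL ▸ Complex.exp_ne_zero _, ?_⟩
  rw [hL, Complex.norm_exp, Real.log_exp]
  have hre : (∑' p, l p).re - PR k s = (∑' p, (l p - ap k p * ((p : ℕ) : ℂ) ^ (-s))).re := by
    rw [hls.tsum_sub (summable_ap k hs), Complex.sub_re, Complex.re_tsum (summable_ap k hs)]; rfl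
  rw [hre]
  refine (Complex.abs_re_le_norm _).trans ?_
  exact tsum_of_norm_bounded (summable_inv_sq.mul_left 8).hasSum hb

lemma PR_zero : ∃ C1 : ℝ, 0 ≤ C1 ∧ ∀ σ : ℝ, 1 < σ → σ ≤ 2 → |PR 0 σ - Real.log (1 / (σ - 1))| ≤ C1 := by
  refine ⟨C0 + Real.log 288, add_nonneg C0_nonneg (Real.log_nonneg (by norm_num)), fun σ h1 h2 => ?_⟩
  obtain ⟨r, hr, hr1, hr2⟩ := L0_eq h1
  have h := (logL (dvd_zero 4) (s := σ) (by simpa using h1)).2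
  have hs : 0 < σ - 1 := by linarith
  have hr0 : 0 < r := lt_of_lt_of_le (by positivity) hr1
  rw [hr, Complex.norm_real, Real.norm_of_nonneg hr0.le] at h
  have l1 : Real.log (1 / (288 * (σ - 1))) ≤ Real.log r := Real.log_le_log (by positivity) hr1
  have l2 : Real.log r ≤ Real.log (288 * (1 / (σ - 1))) := by
    refine Real.log_le_log hr0 (hr2.trans ?_)
    rw [mul_one_div]
    gcongr
    linarith
  rw [Real.log_mul (by norm_num) (by positivity)] at l2
  have e1 : 1 / (288 * (σ - 1)) = 288⁻¹ * (1 / (σ - 1)) := by field_simp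
  rw [e1, Real.log_mul (by norm_num) (by positivity), Real.log_inv] at l1
  rw [abs_le] at h ⊢
  constructor <;> linarith [h.1, h.2]

end LP

namespace LP
open Filter Topology

lemma summable_g (k : ℤ) {σ : ℝ} (hσ : 1 < σ) : Summable fun n : ℕ => ‖a k n‖ * (n : ℝ) ^ (-σ) := by
  refine (a_summable k (s := σ) (by simpa using hσ)).norm.congr fun n => ?_
  rcases eq_or_ne n 0 with rfl | hn
  · simp [a_zero]
  rw [LSeries.term_of_ne_zero hn, norm_div, Complex.norm_natCast_cpow_of_pos (Nat.pos_of_ne_zero hn),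
    Real.rpow_neg (by positivity)]
  simp [div_eq_mul_inv]

lemma summable_absap (k : ℤ) {σ : ℝ} (hσ : 1 < σ) :
    Summable fun p : Nat.Primes => |ap k p| * ((p : ℕ) : ℝ) ^ (-σ) := by
  refine Summable.of_nonneg_of_le (fun p => by positivity) (fun p => ?_)
    (((Nat.Primes.summable_rpow (r := -σ)).mpr (by linarith)).mul_left 2)
  gcongr
  exact abs_ap_le k p

lemma geom_bound {y : ℝ} (h0 : 0 ≤ y) (h1 : y ≤ 1 / 2) :
    Summable (fun e : ℕ => ((e : ℝ) + 3) * y ^ (e + 2)) ∧ ∑' e : ℕ, ((e : ℝ) + 3) * y ^ (e + 2) ≤ 8 * y ^ 2 := by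
  have hA : HasSum (fun e : ℕ => (e : ℝ) * (1 / 2 : ℝ) ^ e) ((1 / 2) / (1 - 1 / 2) ^ 2) :=
    hasSum_coe_mul_geometric_of_norm_lt_one (by norm_num)
  have hB : HasSum (fun e : ℕ => (1 / 2 : ℝ) ^ e) (1 - 1 / 2)⁻¹ :=
    hasSum_geometric_of_norm_lt_one (by norm_num)
  have hC : HasSum (fun e : ℕ => (((e : ℝ) + 3) * (1 / 2 : ℝ) ^ e) * y ^ 2) (8 * y ^ 2) := by
    have := (hA.add (hB.mul_left 3)).mul_right (y ^ 2)
    have e1 : (fun e : ℕ => (((e : ℝ) + 3) * (1 / 2 : ℝ) ^ e) * y ^ 2) =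
        fun e : ℕ => ((e : ℝ) * (1 / 2 : ℝ) ^ e + 3 * (1 / 2 : ℝ) ^ e) * y ^ 2 := by
      funext e; ring
    have e2 : 8 * y ^ 2 = ((1 / 2) / (1 - 1 / 2) ^ 2 + 3 * (1 - 1 / 2)⁻¹) * y ^ 2 := by norm_num
    rw [e1, e2]
    exact this
  have hle : ∀ e : ℕ, ((e : ℝ) + 3) * y ^ (e + 2) ≤ (((e : ℝ) + 3) * (1 / 2 : ℝ) ^ e) * y ^ 2 := by
    intro e
    rw [pow_add, ← mul_assoc]
    gcongr
  have hs := Summable.of_nonneg_of_le (fun e : ℕ => by positivity) hle hC.summable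
  exact ⟨hs, hC.tsum_eq ▸ hs.tsum_le_tsum hle hC.summable⟩

lemma g_euler {k : ℤ} (hk : 4 ∣ k) {σ : ℝ} (hσ : 1 < σ) :
    ∑' n : ℕ, ‖a k n‖ * (n : ℝ) ^ (-σ) ≤
      Real.exp (∑' p : Nat.Primes, |ap k p| * ((p : ℕ) : ℝ) ^ (-σ) + C0) := by
  have hs := summable_g k hσ
  have hprod : HasProd (fun p : Nat.Primes => ∑' e : ℕ, ‖a k ((p : ℕ) ^ e)‖ * (((p : ℕ) ^ e : ℕ) : ℝ) ^ (-σ))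
      (∑' n : ℕ, ‖a k n‖ * (n : ℝ) ^ (-σ)) := by
    refine EulerProduct.eulerProduct_hasProd (f := fun n : ℕ => ‖a k n‖ * (n : ℝ) ^ (-σ))
      ?_ ?_ hs.norm (by simp [a_zero])
    · simp [a_one hk]
    · intro m n hmn
      rw [a_mul k hmn, norm_mul, Nat.cast_mul, Real.mul_rpow (by positivity) (by positivity)]
      ring
  refine hasProd_le_of_prod_le hprod fun T => ?_
  have hloc : ∀ p : Nat.Primes, ∑' e : ℕ, ‖a k ((p : ℕ) ^ e)‖ * (((p : ℕ) ^ e : ℕ) : ℝ) ^ (-σ) ≤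
      Real.exp (|ap k p| * ((p : ℕ) : ℝ) ^ (-σ) + 8 * (((p : ℕ) : ℝ)⁻¹) ^ 2) := by
    intro p
    set x : ℝ := ((p : ℕ) : ℝ) ^ (-σ) with hx
    set y : ℝ := ((p : ℕ) : ℝ)⁻¹ with hy
    have hx0 : 0 ≤ x := by positivity
    have hxy : x ≤ y := rpow_neg_le_inv p.2 hσ.le
    have hy2 : y ≤ 1 / 2 := by
      rw [hy, one_div]; exact inv_anti₀ (by norm_num) (by exact_mod_cast p.2.two_le)
    have hpe : ∀ e : ℕ, (((p : ℕ) ^ e : ℕ) : ℝ) ^ (-σ) = x ^ e := by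
      intro e
      rw [hx, ← Real.rpow_natCast, ← Real.rpow_mul (by positivity), Nat.cast_pow, ← Real.rpow_natCast,
        ← Real.rpow_mul (by positivity)]
      ring_nf
    have hsu : Summable fun e : ℕ => ‖a k ((p : ℕ) ^ e)‖ * (((p : ℕ) ^ e : ℕ) : ℝ) ^ (-σ) :=
      hs.comp_injective (Nat.pow_right_injective p.2.two_le)
    rw [← hsu.sum_add_tsum_nat_add 2]
    simp only [hpe, Finset.sum_range_succ, Finset.sum_range_zero, pow_zero, pow_one, zero_add, mul_one,
      a_one hk, norm_one, a_prime hk, Complex.norm_real, Real.norm_eq_abs] at hsu ⊢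
    have hg := geom_bound (y := y) (hx0.trans hxy) hy2
    have hle : ∀ e : ℕ, ‖a k ((p : ℕ) ^ (e + 2))‖ * x ^ (e + 2) ≤ ((e : ℝ) + 3) * y ^ (e + 2) := by
      intro e
      have := norm_a_pow_le k p.2 (e + 2)
      push_cast at this
      have h3 : (e : ℝ) + 2 + 1 = e + 3 := by ring
      rw [h3] at this
      gcongr
    have h2 := ((summable_nat_add_iff 2).mpr hsu).tsum_le_tsum hle hg.1
    have h3 := Real.add_one_le_exp (|ap k p| * x + 8 * y ^ 2)
    linarith [hg.2]
  calc ∏ p ∈ T, ∑' e : ℕ, ‖a k ((p : ℕ) ^ e)‖ * (((p : ℕ) ^ e : ℕ) : ℝ) ^ (-σ)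
      ≤ ∏ p ∈ T, Real.exp (|ap k p| * ((p : ℕ) : ℝ) ^ (-σ) + 8 * (((p : ℕ) : ℝ)⁻¹) ^ 2) :=
        Finset.prod_le_prod (fun p _ => tsum_nonneg fun e => by positivity) fun p _ => hloc p
    _ = Real.exp (∑ p ∈ T, |ap k p| * ((p : ℕ) : ℝ) ^ (-σ) + ∑ p ∈ T, 8 * (((p : ℕ) : ℝ)⁻¹) ^ 2) := by
        rw [← Real.exp_sum, Finset.sum_add_distrib]
    _ ≤ _ := by
        apply Real.exp_le_exp.mpr
        apply add_le_add
        · exact (summable_absap k hσ).sum_le_tsum _ fun p _ => by positivity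
        · exact (summable_inv_sq.mul_left 8).sum_le_tsum _ fun p _ => by positivity

end LP

namespace LP
open Filter Topology Metric

lemma bc {f : ℂ → ℂ} {c : ℂ} {r M : ℝ} (hr : 0 < r) (hM : 0 < M)
    (hf : DifferentiableOn ℂ f (ball c r)) (h0 : ∀ z ∈ ball c r, f z ≠ 0)
    (hb : ∀ z ∈ ball c r, ‖f z‖ ≤ Real.exp M * ‖f c‖) {z : ℂ} (hz : z ∈ ball c r) :
    |Real.log ‖f z‖ - Real.log ‖f c‖| ≤ 2 * M * ‖z - c‖ / (r - ‖z - c‖) := by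
  have hc : c ∈ ball c r := mem_ball_self hr
  have hfd : ∀ z ∈ ball c r, HasDerivAt f (deriv f z) z := fun z hz =>
    (hf.differentiableAt (isOpen_ball.mem_nhds hz)).hasDerivAt
  have hq : DifferentiableOn ℂ (fun z => deriv f z / f z) (ball c r) :=
    (hf.deriv isOpen_ball).div hf h0
  obtain ⟨h, hh⟩ := hq.isExactOn_ball
  have hconst : ∀ z ∈ ball c r, f z * Complex.exp (-(h z)) = f c * Complex.exp (-(h c)) := by
    intro z hz
    refine isOpen_ball.is_const_of_deriv_eq_zero (𝕜 := ℂ) (f := fun z => f z * Complex.exp (-(h z)))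
      (convex_ball c r).isPreconnected ?_ ?_ hz hc
    · intro w hw
      exact ((hfd w hw).mul (hh w hw).neg.cexp).differentiableAt.differentiableWithinAt
    · intro w hw
      have := ((hfd w hw).mul (hh w hw).neg.cexp).deriv
      simp only [Pi.zero_apply]
      refine Eq.trans this ?_
      have := h0 w hw
      field_simp
      ring
  have hfz : ∀ z ∈ ball c r, f z = f c * Complex.exp (h z - h c) := by
    intro z hz
    have := hconst z hz
    rw [Complex.exp_sub]
    rw [Complex.exp_neg, Complex.exp_neg] at this
    field_simp at this ⊢
    linear_combination this
  have hfc : 0 < ‖f c‖ := norm_pos_iff.mpr (h0 c hc)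
  have hlog : ∀ z ∈ ball c r, Real.log ‖f z‖ - Real.log ‖f c‖ = (h z - h c).re := by
    intro z hz
    rw [hfz z hz, norm_mul, Complex.norm_exp, Real.log_mul hfc.ne' (Real.exp_pos _).ne', Real.log_exp]
    ring
  have hmem : ∀ w ∈ ball (0 : ℂ) r, c + w ∈ ball c r := by
    intro w hw
    simpa [dist_eq_norm] using hw
  have hB := Complex.borelCaratheodory_zero (f := fun w => h (c + w) - h c) (M := M) (R := r) (z := z - c)
    hM ?_ ?_ hr (by simpa [dist_eq_norm] using hz) (by simp)
  · rw [hlog z hz]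
    refine (Complex.abs_re_le_norm _).trans ?_
    simpa using hB
  · intro w hw
    have h1 := hh (c + w) (hmem w hw)
    have h2 : DifferentiableAt ℂ (fun w => h (c + w)) w :=
      DifferentiableAt.comp (g := h) (f := fun w => c + w) w h1.differentiableAt (by fun_prop)
    exact (h2.sub_const _).differentiableWithinAt
  · intro w hw
    have h1 := hmem w hw
    simp only [Set.mem_ofPred_eq]
    rw [← hlog _ h1]
    have := Real.log_le_log (norm_pos_iff.mpr (h0 _ h1)) (hb _ h1)
    rw [Real.log_mul (Real.exp_pos _).ne' hfc.ne', Real.log_exp] at this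
    linarith

/-- Zero extraction. -/
lemma extract {c : ℂ} {R : ℝ} (hR : 0 < R) {U : Set ℂ} (hU : IsOpen U) (hRU : closedBall c R ⊆ U) (n : ℕ) :
    ∀ (f : ℂ → ℂ) (B : ℝ), DifferentiableOn ℂ f U → f c ≠ 0 → (∀ z ∈ closedBall c R, ‖f z‖ ≤ B * ‖f c‖) →
      B < 2 ^ n → ∃ (T : Multiset ℂ) (g : ℂ → ℂ), DifferentiableOn ℂ g U ∧
        (∀ ρ ∈ T, ρ ∈ closedBall c (R / 3)) ∧
        (∀ z ∈ closedBall c (R / 3), g z ≠ 0) ∧ (∀ z ∈ closedBall c R, ‖g z‖ ≤ B * ‖g c‖) ∧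
        ∀ z, f z = (T.map fun ρ => z - ρ).prod * g z := by
  induction n with
  | zero =>
    intro f B hf hfc hb hB
    have h1 := hb c (mem_closedBall_self hR.le)
    have h2 : 0 < ‖f c‖ := norm_pos_iff.mpr hfc
    rw [pow_zero] at hB
    nlinarith
  | succ n ih =>
    intro f B hf hfc hb hB
    by_cases hz : ∃ ρ ∈ closedBall c (R / 3), f ρ = 0
    swap
    · push Not at hz
      exact ⟨0, f, hf, by simp, hz, hb, by simp⟩
    obtain ⟨ρ, hρ, hfρ⟩ := hz
    have hρU : ρ ∈ U := hRU (closedBall_subset_closedBall (by linarith) hρ)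
    set g := dslope f ρ with hg
    have hgd : DifferentiableOn ℂ g U := (Complex.differentiableOn_dslope (hU.mem_nhds hρU)).mpr hf
    have hfg : ∀ z, f z = (z - ρ) * g z := by
      intro z
      have := sub_smul_dslope f ρ z
      rw [hfρ, sub_zero, smul_eq_mul] at this
      exact this.symm
    have hgc : g c ≠ 0 := by
      intro h; apply hfc; rw [hfg, h, mul_zero]
    have hcρ : ‖c - ρ‖ ≤ R / 3 := by
      rw [mem_closedBall, dist_comm, dist_eq_norm] at hρ; exact hρ
    have hB0 : 0 < B := by
      have h1 := hb c (mem_closedBall_self hR.le)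
      have h2 : 0 < ‖f c‖ := norm_pos_iff.mpr hfc
      nlinarith
    have hgb : ∀ z ∈ closedBall c R, ‖g z‖ ≤ B / 2 * ‖g c‖ := by
      intro z hz
      refine Complex.norm_le_of_forall_mem_frontier_norm_le (U := ball c R) isBounded_ball ?_ ?_ ?_
      · apply DifferentiableOn.diffContOnCl
        rw [closure_ball c hR.ne']
        exact hgd.mono hRU
      · intro w hw
        rw [frontier_ball c hR.ne', mem_sphere, dist_eq_norm] at hw
        have h1 := hb w (by rw [mem_closedBall, dist_eq_norm, hw])
        rw [hfg w, hfg c, norm_mul, norm_mul] at h1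
        have h2 : 2 * R / 3 ≤ ‖w - ρ‖ := by
          have := norm_sub_le_norm_sub_add_norm_sub w ρ c
          rw [hw] at this
          rw [norm_sub_rev] at hcρ
          linarith
        have h3 : 2 * R / 3 * ‖g w‖ ≤ B * (R / 3 * ‖g c‖) :=
          calc _ ≤ ‖w - ρ‖ * ‖g w‖ := by gcongr
            _ ≤ _ := h1
            _ ≤ _ := by gcongr
        have h4 : R * (2 * ‖g w‖) ≤ R * (B * ‖g c‖) := by linarith
        have := le_of_mul_le_mul_left h4 hR
        linarith
      · rw [closure_ball c hR.ne']; exact hz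
    obtain ⟨T, g', hd, hT, hg0, hgb', hfac⟩ := ih g (B / 2) hgd hgc hgb (by rw [pow_succ] at hB; linarith)
    refine ⟨ρ ::ₘ T, g', hd, ?_, hg0, ?_, ?_⟩
    · intro x hx
      rcases Multiset.mem_cons.mp hx with rfl | h
      · exact hρ
      · exact hT x h
    · intro z hz
      refine (hgb' z hz).trans ?_
      gcongr
      linarith
    · intro z
      rw [hfg, hfac, Multiset.map_cons, Multiset.prod_cons, mul_assoc]

lemma prod_norm_le {c p : ℂ} (T : Multiset ℂ) (h : ∀ ρ ∈ T, ‖p - ρ‖ ≤ ‖c - ρ‖) :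
    ‖(T.map fun ρ => p - ρ).prod‖ ≤ ‖(T.map fun ρ => c - ρ).prod‖ := by
  induction T using Multiset.induction with
  | empty => simp
  | cons x T ih =>
    rw [Multiset.map_cons, Multiset.prod_cons, Multiset.map_cons, Multiset.prod_cons, norm_mul, norm_mul]
    exact mul_le_mul (h x (Multiset.mem_cons_self _ _)) (ih fun ρ hρ => h ρ (Multiset.mem_cons_of_mem hρ))
      (_root_.norm_nonneg _) (_root_.norm_nonneg _)

lemma landau {c p : ℂ} {R M : ℝ} (hR : 0 < R) (hM : 0 < M) {U : Set ℂ} (hU : IsOpen U)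
    (hRU : closedBall c R ⊆ U) {f : ℂ → ℂ} (hf : DifferentiableOn ℂ f U) (hfc : f c ≠ 0)
    (hb : ∀ z ∈ closedBall c R, ‖f z‖ ≤ Real.exp M * ‖f c‖) (hp : p ∈ ball c (R / 3))
    (hρ : ∀ ρ, f ρ = 0 → ‖p - ρ‖ ≤ ‖c - ρ‖) :
    ‖f p‖ ≤ Real.exp (2 * M * ‖p - c‖ / (R / 3 - ‖p - c‖)) * ‖f c‖ ∧
    ∀ ρ ∈ closedBall c (R / 3), f ρ = 0 →
      ‖c - ρ‖ * ‖f p‖ ≤ Real.exp (2 * M * ‖p - c‖ / (R / 3 - ‖p - c‖)) * (‖f c‖ * ‖p - ρ‖) := by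
  obtain ⟨n, hn⟩ := pow_unbounded_of_one_lt (Real.exp M) (one_lt_two)
  obtain ⟨T, g, hd, hT, hg0, hgb, hfac⟩ := extract hR hU hRU n f (Real.exp M) hf hfc hb hn
  have hcm : c ∈ closedBall c (R / 3) := mem_closedBall_self (by linarith)
  have hsub : ball c (R / 3) ⊆ closedBall c R := ball_subset_closedBall.trans
    (closedBall_subset_closedBall (by linarith))
  have hbc := bc (f := g) (c := c) (r := R / 3) (M := M) (by linarith) hM (hd.mono (hsub.trans hRU))
    (fun z hz => hg0 z (ball_subset_closedBall hz)) (fun z hz => hgb z (hsub hz)) hp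
  set E := 2 * M * ‖p - c‖ / (R / 3 - ‖p - c‖)
  have hgc : 0 < ‖g c‖ := norm_pos_iff.mpr (hg0 c hcm)
  have hgp : 0 < ‖g p‖ := norm_pos_iff.mpr (hg0 p (ball_subset_closedBall hp))
  have hgg : ‖g p‖ ≤ Real.exp E * ‖g c‖ := by
    have := (abs_le.mp hbc).2
    rw [← Real.log_le_log_iff hgp (by positivity), Real.log_mul (Real.exp_pos _).ne' hgc.ne', Real.log_exp]
    linarith
  have hTz : ∀ ρ ∈ T, f ρ = 0 := by
    intro ρ h
    rw [hfac ρ, Multiset.prod_eq_zero, zero_mul]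
    exact Multiset.mem_map.mpr ⟨ρ, h, sub_self _⟩
  constructor
  · rw [hfac p, hfac c, norm_mul, norm_mul]
    calc _ ≤ ‖(T.map fun ρ => c - ρ).prod‖ * (Real.exp E * ‖g c‖) :=
          mul_le_mul (prod_norm_le T fun ρ h => hρ ρ (hTz ρ h)) hgg hgp.le (_root_.norm_nonneg _)
      _ = _ := by ring
  · intro ρ hρm hρ0
    have hmem : ρ ∈ T := by
      rw [hfac ρ] at hρ0
      rcases mul_eq_zero.mp hρ0 with h | h
      · rw [Multiset.prod_eq_zero_iff, Multiset.mem_map] at h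
        obtain ⟨x, hx, hx0⟩ := h
        rw [sub_eq_zero.mp hx0]; exact hx
      · exact absurd h (hg0 ρ hρm)
    obtain ⟨T', rfl⟩ := Multiset.exists_cons_of_mem hmem
    rw [hfac p, hfac c]
    simp only [Multiset.map_cons, Multiset.prod_cons, norm_mul]
    calc _ = ‖c - ρ‖ * ‖p - ρ‖ * (‖(T'.map fun ρ => p - ρ).prod‖ * ‖g p‖) := by ring
      _ ≤ ‖c - ρ‖ * ‖p - ρ‖ * (‖(T'.map fun ρ => c - ρ).prod‖ * (Real.exp E * ‖g c‖)) := by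
          gcongr
          exact prod_norm_le T' fun ρ h => hρ ρ (hTz ρ (Multiset.mem_cons_of_mem h))
      _ = _ := by ring

end LP

namespace LP
open Filter Topology Metric

lemma re_term (k : ℤ) (p : Nat.Primes) (s : ℂ) :
    ((ap k p : ℂ) * ((p : ℕ) : ℂ) ^ (-s)).re =
      ap k p * (((p : ℕ) : ℝ) ^ (-s.re) * Real.cos (s.im * Real.log (p : ℕ))) := by
  have hp : (0 : ℝ) < (p : ℕ) := by exact_mod_cast p.2.pos
  rw [Complex.re_ofReal_mul]
  congr 1
  have h1 : ((p : ℕ) : ℂ) = (((p : ℕ) : ℝ) : ℂ) := by simp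
  rw [Complex.cpow_def_of_ne_zero (by exact_mod_cast hp.ne'), h1, ← Complex.ofReal_log hp.le, Complex.exp_re]
  simp only [Complex.mul_re, Complex.mul_im, Complex.ofReal_re, Complex.ofReal_im, Complex.neg_re,
    Complex.neg_im]
  rw [Real.rpow_def_of_pos hp]
  simp only [zero_mul, sub_zero, add_zero]
  congr 1
  rw [← Real.cos_neg]; congr 1; ring

lemma PR_zero_real (σ : ℝ) : PR 0 σ = ∑' p : Nat.Primes, nu p * ((p : ℕ) : ℝ) ^ (-σ) := by
  unfold PR
  refine tsum_congr fun p => ?_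
  rw [re_term, ap_zero]; simp

lemma PR_real (k : ℤ) (σ : ℝ) : PR k σ = ∑' p : Nat.Primes, ap k p * ((p : ℕ) : ℝ) ^ (-σ) := by
  unfold PR
  refine tsum_congr fun p => ?_
  rw [re_term]; simp

lemma summable_nu {σ : ℝ} (hσ : 1 < σ) : Summable fun p : Nat.Primes => nu p * ((p : ℕ) : ℝ) ^ (-σ) := by
  refine (summable_absap 0 hσ).congr fun p => ?_
  rw [ap_zero, abs_of_nonneg (nu_nonneg p)]

lemma PR_ge (k : ℤ) {s : ℂ} (hs : 1 < s.re) : -PR 0 s.re ≤ PR k s := by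
  rw [PR_zero_real, ← tsum_neg]
  unfold PR
  refine (summable_nu hs).neg.tsum_le_tsum (fun p => ?_) (summable_ap_re k hs)
  have h1 := (abs_le.mp (Complex.abs_re_le_norm ((ap k p : ℂ) * ((p : ℕ) : ℂ) ^ (-s)))).1
  rw [norm_mul, norm_pcpow p.2, Complex.norm_real, Real.norm_eq_abs] at h1
  have := mul_le_mul_of_nonneg_right (abs_ap_le_nu k p) (show 0 ≤ ((p : ℕ) : ℝ) ^ (-s.re) by positivity)
  linarith

lemma trig (x y : ℝ) : 0 ≤ 3 + 4 * (Real.cos x * Real.cos y) + Real.cos (2 * x) * Real.cos (2 * y) := by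
  rw [Real.cos_two_mul, Real.cos_two_mul]
  have h1 := Real.sin_sq_add_cos_sq x
  have h2 := Real.sin_sq_add_cos_sq y
  nlinarith [sq_nonneg (Real.cos x * Real.cos y + 1), sq_nonneg (Real.sin x * Real.sin y),
    sq_nonneg (Real.sin x), sq_nonneg (Real.sin y), sq_nonneg (Real.sin x * Real.cos y)]

lemma three_four_one (K : ℤ) {ε η γ : ℝ} (hε : 0 < ε) (hεη : ε ≤ η) :
    0 ≤ 3 * (PR 0 ((1 + ε : ℝ) : ℂ) - PR 0 ((1 + η : ℝ) : ℂ)) +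
      4 * (PR K ⟨1 + ε, γ⟩ - PR K ⟨1 + η, γ⟩) + (PR (2 * K) ⟨1 + ε, 2 * γ⟩ - PR (2 * K) ⟨1 + η, 2 * γ⟩) := by
  have h0 : ∀ x : ℝ, 0 < x → Summable fun p : Nat.Primes =>
      ((ap 0 p : ℂ) * ((p : ℕ) : ℂ) ^ (-((1 + x : ℝ) : ℂ))).re := fun x hx =>
    summable_ap_re 0 (by rw [Complex.ofReal_re]; linarith)
  have h1 : ∀ (k : ℤ) (x t : ℝ), 0 < x → Summable fun p : Nat.Primes =>
      ((ap k p : ℂ) * ((p : ℕ) : ℂ) ^ (-(⟨1 + x, t⟩ : ℂ))).re := fun k x t hx =>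
    summable_ap_re k (by simpa using hx)
  have hη : 0 < η := hε.trans_le hεη
  unfold PR
  rw [← (h0 ε hε).tsum_sub (h0 η hη), ← (h1 K ε γ hε).tsum_sub (h1 K η γ hη),
    ← (h1 (2 * K) ε (2 * γ) hε).tsum_sub (h1 (2 * K) η (2 * γ) hη), ← tsum_mul_left, ← tsum_mul_left,
    ← (((h0 ε hε).sub (h0 η hη)).mul_left 3).tsum_add (((h1 K ε γ hε).sub (h1 K η γ hη)).mul_left 4),
    ← ((((h0 ε hε).sub (h0 η hη)).mul_left 3).add (((h1 K ε γ hε).sub (h1 K η γ hη)).mul_left 4)).tsum_add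
      ((h1 (2 * K) ε (2 * γ) hε).sub (h1 (2 * K) η (2 * γ) hη))]
  refine tsum_nonneg fun p => ?_
  simp only [re_term, Complex.ofReal_re, Complex.ofReal_im, zero_mul, Real.cos_zero, mul_one]
  have hd : 0 ≤ ((p : ℕ) : ℝ) ^ (-(1 + ε)) - ((p : ℕ) : ℝ) ^ (-(1 + η)) := by
    rw [sub_nonneg]
    exact Real.rpow_le_rpow_of_exponent_le (by exact_mod_cast p.2.one_lt.le) (by linarith)
  have ht := trig (K * th p) (γ * Real.log (p : ℕ))
  have := mul_nonneg (mul_nonneg (nu_nonneg p) hd) ht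
  have e1 : ap (2 * K) p = nu p * Real.cos (2 * (K * th p)) := by
    rw [ap]; push_cast; rw [mul_assoc]
  rw [e1, ap_zero, ap, mul_assoc 2 γ]
  linear_combination this

lemma F_upper (K : ℤ) (hK : K ≠ 0) {z : ℂ} (h1 : 7 / 8 ≤ z.re) (h2 : ‖z‖ ≤ 3) :
    ‖F K z‖ ≤ 6000 * |(K : ℝ)| := by
  refine (F_bound K hK (by linarith)).trans ?_
  have h3 : 0 < z.re - 3 / 4 := by linarith
  calc _ ≤ 3 * (250 * |(K : ℝ)| / (1 / 8)) := by gcongr; linarith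
    _ = _ := by ring

lemma F_ne {K : ℤ} (h4 : 4 ∣ K) {s : ℂ} (hs : 1 < s.re) : F K s ≠ 0 := by
  rw [F_eq K hs]; exact (logL h4 hs).1

lemma logF {K : ℤ} (h4 : 4 ∣ K) {s : ℂ} (hs : 1 < s.re) : |Real.log ‖F K s‖ - PR K s| ≤ C0 := by
  rw [F_eq K hs]; exact (logL h4 hs).2

lemma ratio : ∃ C2 : ℝ, 0 ≤ C2 ∧ ∀ (K : ℤ), K ≠ 0 → 4 ∣ K → ∀ c : ℂ, 1 < c.re → c.re ≤ 9 / 8 → |c.im| ≤ 1 →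
    ∀ z ∈ closedBall c (1 / 8), ‖F K z‖ ≤
      Real.exp (Real.log |(K : ℝ)| + Real.log (1 / (c.re - 1)) + C2) * ‖F K c‖ := by
  obtain ⟨C1, hC1, hP⟩ := PR_zero
  refine ⟨Real.log 6000 + C0 + C1, add_nonneg (add_nonneg (Real.log_nonneg (by norm_num)) C0_nonneg) hC1, ?_⟩
  intro K hK h4 c hc1 hc2 hci z hz
  rw [mem_closedBall, dist_eq_norm] at hz
  have hre := (abs_le.mp ((Complex.abs_re_le_norm (z - c)).trans hz))
  rw [Complex.sub_re] at hre
  have hcn : ‖c‖ ≤ 9 / 8 + 1 := (Complex.norm_le_abs_re_add_abs_im c).trans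
    (add_le_add (by rw [abs_of_pos (by linarith)]; exact hc2) hci)
  have hzn : ‖z‖ ≤ 3 := by
    have := norm_le_norm_add_norm_sub' z c
    linarith
  have hu := F_upper K hK (by linarith [hre.1]) hzn
  refine hu.trans ?_
  have hc0 : 0 < ‖F K c‖ := norm_pos_iff.mpr (F_ne h4 hc1)
  have hKpos : 0 < |(K : ℝ)| := abs_pos.mpr (by exact_mod_cast hK)
  rw [← Real.log_le_log_iff (by positivity) (by positivity), Real.log_mul (Real.exp_pos _).ne' hc0.ne',
    Real.log_exp, Real.log_mul (by norm_num) hKpos.ne']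
  have l1 := (abs_le.mp (logF h4 hc1)).1
  have l2 := PR_ge K hc1
  have l3 := (abs_le.mp (hP c.re hc1 (by linarith))).2
  linarith

lemma log_K_ge {K : ℤ} (hK : K ≠ 0) (h4 : 4 ∣ K) : 1 ≤ Real.log |(K : ℝ)| ∧ 4 ≤ |(K : ℝ)| := by
  have h : (4 : ℤ) ≤ |K| := by
    obtain ⟨m, rfl⟩ := h4
    have : m ≠ 0 := by rintro rfl; simp at hK
    rw [abs_mul]
    have := Int.one_le_abs this
    norm_num; linarith
  have h' : (4 : ℝ) ≤ |(K : ℝ)| := by exact_mod_cast h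
  refine ⟨?_, h'⟩
  rw [Real.le_log_iff_exp_le (by linarith)]
  linarith [Real.exp_one_lt_d9]

end LP

namespace LP
open Filter Topology Metric

lemma F_land : ∃ C2 : ℝ, 0 ≤ C2 ∧ ∀ (K : ℤ), K ≠ 0 → 4 ∣ K → ∀ ε η γ : ℝ, 0 < ε → ε ≤ η → η ≤ 1 / 48 → |γ| ≤ 1 →
    PR K ⟨1 + ε, γ⟩ - PR K ⟨1 + η, γ⟩ ≤ 96 * (Real.log |(K : ℝ)| + Real.log (1 / η) + C2) * η + 2 * C0 ∧
    ∀ δ : ℝ, 0 ≤ δ → η + δ ≤ 1 / 24 → F K ⟨1 - δ, γ⟩ = 0 →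
    PR K ⟨1 + ε, γ⟩ - PR K ⟨1 + η, γ⟩ ≤ 96 * (Real.log |(K : ℝ)| + Real.log (1 / η) + C2) * η + 2 * C0
      + Real.log ((ε + δ) / (η + δ)) := by
  obtain ⟨C2, hC2, hr⟩ := ratio
  refine ⟨C2, hC2, ?_⟩
  intro K hK h4 ε η γ hε hεη hη hγ
  have hη0 : 0 < η := hε.trans_le hεη
  set c : ℂ := ⟨1 + η, γ⟩ with hc
  set p : ℂ := ⟨1 + ε, γ⟩ with hp
  set M := Real.log |(K : ℝ)| + Real.log (1 / η) + C2 with hM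
  have hΛ := (log_K_ge hK h4).1
  have hlη : 0 ≤ Real.log (1 / η) := Real.log_nonneg (by rw [le_div_iff₀ hη0]; linarith)
  have hM0 : 0 < M := by linarith
  have hb : ∀ z ∈ closedBall c (1 / 8), ‖F K z‖ ≤ Real.exp M * ‖F K c‖ := by
    have := hr K hK h4 c (by simp [hc, hη0]) (by simp [hc]; linarith) hγ
    rw [show c.re - 1 = η by simp [hc]] at this
    exact this
  have hcre : 1 < c.re := by simp [hc, hη0]
  have hpre : 1 < p.re := by simp [hp, hε]
  have hpc : ‖p - c‖ = η - ε := by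
    have : p - c = ((ε - η : ℝ) : ℂ) := by
      apply Complex.ext <;> simp [hp, hc]
    rw [this, Complex.norm_real, Real.norm_eq_abs, abs_sub_comm, abs_of_nonneg (by linarith)]
  have hU : closedBall c (1 / 8) ⊆ {z : ℂ | 3 / 4 < z.re} := by
    intro z hz
    rw [mem_closedBall, dist_eq_norm] at hz
    have hre := (abs_le.mp ((Complex.abs_re_le_norm (z - c)).trans hz)).1
    rw [Complex.sub_re] at hre
    simp only [Set.mem_ofPred_eq]; linarith
  have hρ : ∀ ρ, F K ρ = 0 → ‖p - ρ‖ ≤ ‖c - ρ‖ := by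
    intro ρ h0
    have h1 : ρ.re ≤ 1 := by
      by_contra h
      exact F_ne h4 (not_le.mp h) h0
    rw [Complex.norm_def, Complex.norm_def]
    apply Real.sqrt_le_sqrt
    simp only [Complex.normSq_apply, Complex.sub_re, Complex.sub_im, hp, hc]
    nlinarith
  have L := landau (f := F K) (p := p) (c := c) (R := 1 / 8) (by norm_num) hM0
    (isOpen_lt continuous_const Complex.continuous_re) hU
    (fun z hz => (F_diff K hK hz).differentiableWithinAt) (F_ne h4 hcre) hb
    (by rw [mem_ball, dist_eq_norm, hpc]; linarith) hρ
  rw [hpc] at L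
  set E := 2 * M * (η - ε) / (1 / 8 / 3 - (η - ε)) with hE
  have hEle : E ≤ 96 * M * η := by
    rw [hE, div_le_iff₀ (by linarith)]
    have : 0 ≤ M * η := by positivity
    have h2 : M * (η - ε) ≤ M * η := by gcongr; linarith
    nlinarith
  have lc := abs_le.mp (logF h4 hcre)
  have lp := abs_le.mp (logF h4 hpre)
  have hFc : 0 < ‖F K c‖ := norm_pos_iff.mpr (F_ne h4 hcre)
  have hFp : 0 < ‖F K p‖ := norm_pos_iff.mpr (F_ne h4 hpre)
  constructor
  · have := Real.log_le_log hFp L.1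
    rw [Real.log_mul (Real.exp_pos _).ne' hFc.ne', Real.log_exp] at this
    linarith [lc.1, lc.2, lp.1, lp.2]
  · intro δ hδ hδ2 h0
    have e1 : ‖c - ⟨1 - δ, γ⟩‖ = η + δ := by
      have : c - ⟨1 - δ, γ⟩ = ((η + δ : ℝ) : ℂ) := by
        apply Complex.ext <;> simp [hc]
      rw [this, Complex.norm_real, Real.norm_eq_abs, abs_of_nonneg (by linarith)]
    have e2 : ‖p - ⟨1 - δ, γ⟩‖ = ε + δ := by
      have : p - ⟨1 - δ, γ⟩ = ((ε + δ : ℝ) : ℂ) := by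
        apply Complex.ext <;> simp [hp]
      rw [this, Complex.norm_real, Real.norm_eq_abs, abs_of_nonneg (by linarith)]
    have := L.2 ⟨1 - δ, γ⟩ (by
      rw [mem_closedBall, dist_comm, dist_eq_norm, e1]; linarith) h0
    rw [e1, e2] at this
    have hp1 : 0 < η + δ := by linarith
    have hp2 : 0 < ε + δ := by linarith
    have := Real.log_le_log (by positivity) this
    rw [Real.log_mul (Real.exp_pos _).ne' (by positivity), Real.log_exp, Real.log_mul hp1.ne' hFp.ne',
      Real.log_mul hFc.ne' hp2.ne'] at this
    rw [Real.log_div hp2.ne' hp1.ne']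
    linarith [lc.1, lc.2, lp.1, lp.2]

lemma zero_free : ∃ κ : ℝ, 0 < κ ∧ κ ≤ 1 / 48 ∧ ∀ K : ℤ, K ≠ 0 → 4 ∣ K → ∀ ρ : ℂ, F K ρ = 0 → |ρ.im| ≤ 1 / 2 →
    ρ.re < 1 - κ / Real.log |(K : ℝ)| := by
  obtain ⟨C2, hC2, hL⟩ := F_land
  obtain ⟨C1, hC1, hP⟩ := PR_zero
  set D := 3 + Real.log 48 + C2 with hD
  have hl48 : 0 ≤ Real.log 48 := Real.log_nonneg (by norm_num)
  have hl16 : 0 ≤ Real.log 16 := Real.log_nonneg (by norm_num)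
  have hC0 := C0_nonneg
  set W := 6 * C1 + 10 * D + 10 * C0 + Real.log 16 + 1 with hW
  have hW1 : 0 ≤ W := by positivity
  refine ⟨Real.exp (-W) / 48, by positivity, ?_, ?_⟩
  · have : Real.exp (-W) ≤ 1 := Real.exp_le_one_iff.mpr (by linarith)
    linarith
  intro K hK h4 ρ h0 him
  obtain ⟨hΛ, hK4⟩ := log_K_ge hK h4
  set Λ := Real.log |(K : ℝ)| with hΛd
  by_contra hcon
  rw [not_lt] at hcon
  set η := 1 / (48 * Λ) with hη
  have hη0 : 0 < η := by positivity
  have hη1 : η ≤ 1 / 48 := by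
    rw [hη]; apply one_div_le_one_div_of_le <;> linarith
  set ε := η * Real.exp (-W) with hε
  have hε0 : 0 < ε := by positivity
  have hεη : ε ≤ η := by
    have : Real.exp (-W) ≤ 1 := Real.exp_le_one_iff.mpr (by linarith)
    rw [hε]; nlinarith
  have h1 : ρ.re ≤ 1 := by
    by_contra h
    exact F_ne h4 (not_le.mp h) h0
  set δ := 1 - ρ.re with hδ
  have hδε : δ ≤ ε := by
    have : ε = Real.exp (-W) / 48 / Λ := by rw [hε, hη]; field_simp
    rw [this]; linarith
  have hρ : ρ = ⟨1 - δ, ρ.im⟩ := by apply Complex.ext <;> simp [hδ]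
  have A1 := (hL K hK h4 ε η ρ.im hε0 hεη hη1 (by linarith)).2 δ (by linarith) (by linarith) (by rw [← hρ]; exact h0)
  have A2 := (hL (2 * K) (by simpa using hK) (Dvd.dvd.mul_left h4 2) ε η (2 * ρ.im) hε0 hεη hη1
    (by rw [abs_mul, abs_two]; linarith)).1
  have A3 := three_four_one K (γ := ρ.im) hε0 hεη
  have p1 := (abs_le.mp (hP (1 + ε) (by linarith) (by linarith))).2
  have p2 := (abs_le.mp (hP (1 + η) (by linarith) (by linarith))).1
  have l2K : Real.log |((2 * K : ℤ) : ℝ)| ≤ 2 * Λ := by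
    push_cast
    rw [abs_mul, abs_two, Real.log_mul (by norm_num) (by positivity)]
    have := Real.log_le_log (by norm_num) (show (2 : ℝ) ≤ |(K : ℝ)| by linarith)
    linarith
  have lη : Real.log (1 / η) = Real.log 48 + Real.log Λ := by
    rw [hη, one_div_one_div, Real.log_mul (by norm_num) (by positivity)]
  have lΛ : Real.log Λ ≤ Λ := by linarith [Real.log_le_sub_one_of_pos (show 0 < Λ by linarith)]
  have hηΛ : η * Λ = 1 / 48 := by rw [hη]; field_simp
  have hm : ∀ x, x ≤ 2 * Λ → 96 * (x + Real.log (1 / η) + C2) * η ≤ 2 * D := by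
    intro x hx
    have : x + Real.log (1 / η) + C2 ≤ D * Λ := by
      rw [lη, hD]
      nlinarith
    have := mul_le_mul_of_nonneg_right this hη0.le
    nlinarith
  have m1 := hm Λ (by linarith)
  have m2 := hm _ l2K
  have lε : Real.log (1 / ε) = Real.log (1 / η) + W := by
    rw [hε, one_div, one_div, mul_inv, Real.log_mul (by positivity) (by positivity), ← Real.exp_neg, Real.log_exp,
      neg_neg]
  have lq : Real.log ((ε + δ) / (η + δ)) ≤ Real.log 2 - W := by
    have : (ε + δ) / (η + δ) ≤ 2 * Real.exp (-W) := by
      rw [div_le_iff₀ (by linarith)]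
      have : 2 * Real.exp (-W) * η = 2 * ε := by rw [hε]; ring
      have : 0 ≤ 2 * Real.exp (-W) * δ := mul_nonneg (by positivity) (by linarith)
      nlinarith
    have := Real.log_le_log (div_pos (by linarith) (by linarith)) this
    rwa [Real.log_mul (by norm_num) (Real.exp_pos _).ne', Real.log_exp] at this
  have l16 : Real.log 16 = 4 * Real.log 2 := by
    rw [show (16 : ℝ) = 2 ^ 4 by norm_num, Real.log_pow]; norm_num
  have q1 : Real.log (1 / (1 + ε - 1)) = Real.log (1 / ε) := by congr 2; ring
  have q2 : Real.log (1 / (1 + η - 1)) = Real.log (1 / η) := by congr 2; ring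
  rw [q1] at p1; rw [q2] at p2
  linarith

lemma lemE : ∃ CE c0 : ℝ, 0 ≤ CE ∧ 0 < c0 ∧ c0 ≤ 1 / 8 ∧ ∀ K : ℤ, K ≠ 0 → 4 ∣ K → ∀ σ : ℝ, 1 < σ →
    σ ≤ 1 + c0 / (Real.log |(K : ℝ)|) ^ 2 →
    |PR K σ - PR K ((1 + c0 / (Real.log |(K : ℝ)|) ^ 2 : ℝ) : ℂ)| ≤ CE := by
  obtain ⟨κ, hκ0, hκ1, hZ⟩ := zero_free
  obtain ⟨C2, hC2, hr⟩ := ratio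
  set c0 := κ / 4 with hc0
  have hc00 : 0 < c0 := by positivity
  have hl : 0 ≤ Real.log (1 / c0) := Real.log_nonneg (by rw [le_div_iff₀ hc00]; linarith)
  set D := 3 + Real.log (1 / c0) + C2 with hD
  refine ⟨D + 2 * C0, c0, by have := C0_nonneg; positivity, hc00, by linarith, ?_⟩
  intro K hK h4 σ hσ1 hσ2
  obtain ⟨hΛ, hK4⟩ := log_K_ge hK h4
  set Λ := Real.log |(K : ℝ)| with hΛd
  set y := 1 + c0 / Λ ^ 2 with hy
  have hΛ0 : 0 < Λ := by linarith
  have hy1 : 1 < y := by rw [hy]; have : 0 < c0 / Λ ^ 2 := by positivity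
                         linarith
  have hq : c0 / Λ ^ 2 ≤ κ / Λ / 4 := by
    rw [hc0, div_div, div_div, div_le_div_iff₀ (by positivity) (by positivity)]
    nlinarith [mul_pos hκ0 hΛ0]
  have hκΛ : κ / Λ ≤ 1 / 48 := by
    rw [div_le_iff₀ hΛ0]; linarith
  have hrp : 0 < κ / Λ := by positivity
  set M := Λ + Real.log (1 / (y - 1)) + C2 with hM
  have ly : Real.log (1 / (y - 1)) = Real.log (1 / c0) + 2 * Real.log Λ := by
    rw [hy, add_sub_cancel_left, one_div_div, Real.log_div (by positivity) (by positivity), Real.log_pow,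
      Real.log_div one_ne_zero (by positivity), Real.log_one]; push_cast; ring
  have lΛ : Real.log Λ ≤ Λ := by linarith [Real.log_le_sub_one_of_pos (show 0 < Λ by linarith)]
  have lΛ0 : 0 ≤ Real.log Λ := Real.log_nonneg hΛ
  have hM0 : 0 < M := by rw [hM, ly]; linarith
  have hMD : M ≤ D * Λ := by
    rw [hM, ly, hD]; nlinarith
  have hsub : ball (y : ℂ) (κ / Λ) ⊆ closedBall (y : ℂ) (1 / 8) :=
    ball_subset_closedBall.trans (closedBall_subset_closedBall (by linarith))
  have hinfo : ∀ z ∈ ball (y : ℂ) (κ / Λ), 1 - κ / Λ < z.re ∧ |z.im| ≤ 1 / 2 := by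
    intro z hz
    rw [mem_ball, dist_eq_norm] at hz
    have a1 := (abs_lt.mp ((Complex.abs_re_le_norm _).trans_lt hz)).1
    have a2 := (Complex.abs_im_le_norm _).trans_lt hz
    simp only [Complex.sub_re, Complex.sub_im, Complex.ofReal_re, Complex.ofReal_im, sub_zero] at a1 a2
    exact ⟨by linarith, by linarith⟩
  have hn : ‖(σ : ℂ) - (y : ℂ)‖ = y - σ := by
    rw [← Complex.ofReal_sub, Complex.norm_real, Real.norm_eq_abs, abs_sub_comm, abs_of_nonneg (by linarith)]
  have B := bc (f := F K) (c := (y : ℂ)) (z := (σ : ℂ)) hrp hM0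
    (fun z hz => (F_diff K hK (by linarith [(hinfo z hz).1])).differentiableWithinAt)
    (fun z hz h0 => by
      have := hZ K hK h4 z h0 (hinfo z hz).2
      linarith [(hinfo z hz).1])
    (fun z hz => hr K hK h4 y (by simpa using hy1) (by simp; linarith) (by simp) z (hsub hz))
    (by rw [mem_ball, dist_eq_norm, hn]; linarith)
  rw [hn] at B
  have hB : 2 * M * (y - σ) / (κ / Λ - (y - σ)) ≤ D := by
    rw [div_le_iff₀ (by linarith)]
    have h1 : 2 * M * (y - σ) ≤ 2 * (D * Λ) * (c0 / Λ ^ 2) := by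
      have : y - σ ≤ c0 / Λ ^ 2 := by linarith
      have : 0 ≤ y - σ := by linarith
      gcongr
    have h2 : 2 * (D * Λ) * (c0 / Λ ^ 2) = D * (κ / Λ / 2) := by
      rw [hc0]; field_simp; ring
    have h3 : D * (κ / Λ / 2) ≤ D * (κ / Λ - (y - σ)) := by
      gcongr; linarith
    linarith
  have B := abs_le.mp (B.trans hB)
  have lc := abs_le.mp (logF h4 (s := (y : ℂ)) (by simpa using hy1))
  have lp := abs_le.mp (logF h4 (s := (σ : ℂ)) (by simpa using hσ1))
  rw [abs_le]
  constructor <;> linarith [B.1, B.2, lc.1, lc.2, lp.1, lp.2]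

end LP

namespace LP
open Filter Topology Metric

lemma cos_periodic : Function.Periodic (fun x : ℝ => ((|Real.cos x| : ℝ) : ℂ)) Real.pi := by
  intro x; simp [Real.cos_add_pi]

noncomputable def fc : C(AddCircle Real.pi, ℂ) where
  toFun := cos_periodic.lift
  continuous_toFun := by
    apply continuous_quot_lift
    fun_prop

lemma fc_coe (x : ℝ) : fc (x : AddCircle Real.pi) = ((|Real.cos x| : ℝ) : ℂ) := rfl

noncomputable def dd (n : ℤ) : ℝ := 2 * Real.cos (n * Real.pi) / (Real.pi * (1 - 4 * (n : ℝ) ^ 2))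

instance : Fact (0 < Real.pi) := ⟨Real.pi_pos⟩

lemma four_ne (n : ℤ) : (1 - 4 * (n : ℝ) ^ 2) ≠ 0 := by
  intro h
  have h' : (1 : ℤ) - 4 * n ^ 2 = 0 := by exact_mod_cast h
  omega

lemma fc_coeff (n : ℤ) : fourierCoeff fc n = (dd n : ℂ) := by
  rw [fourierCoeff_eq_intervalIntegral fc n (-(Real.pi / 2))]
  have hne : (1 - 4 * (n : ℂ) ^ 2) ≠ 0 := by exact_mod_cast four_ne n
  have hpi : (Real.pi : ℂ) ≠ 0 := by exact_mod_cast Real.pi_ne_zero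
  have e1 : -(Real.pi / 2) + Real.pi = Real.pi / 2 := by ring
  rw [e1]
  have e2 : ∫ x in (-(Real.pi / 2))..(Real.pi / 2), fourier (-n) (x : AddCircle Real.pi) • fc (x : AddCircle Real.pi)
      = ∫ x in (-(Real.pi / 2))..(Real.pi / 2), Complex.exp (-2 * n * Complex.I * x) * Complex.cos x := by
    apply intervalIntegral.integral_congr
    intro x hx
    rw [Set.uIcc_of_le (by linarith [Real.pi_pos])] at hx
    simp only [fc_coe, fourier_coe_apply, smul_eq_mul]
    rw [abs_of_nonneg (Real.cos_nonneg_of_mem_Icc hx), Complex.ofReal_cos]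
    congr 2
    push_cast
    field_simp
  rw [e2, intervalIntegral.integral_eq_sub_of_hasDerivAt
    (f := fun x : ℝ => Complex.exp (-2 * n * Complex.I * x) * (Complex.sin x - 2 * n * Complex.I * Complex.cos x)
      / (1 - 4 * (n : ℂ) ^ 2))]
  · have c1 : Complex.cos ((Real.pi / 2 : ℝ) : ℂ) = 0 := by
      rw [← Complex.ofReal_cos]; simp
    have c2 : Complex.cos ((-(Real.pi / 2) : ℝ) : ℂ) = 0 := by
      rw [← Complex.ofReal_cos]; simp
    have s1 : Complex.sin ((Real.pi / 2 : ℝ) : ℂ) = 1 := by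
      rw [← Complex.ofReal_sin]; simp
    have s2 : Complex.sin ((-(Real.pi / 2) : ℝ) : ℂ) = -1 := by
      rw [← Complex.ofReal_sin]; simp
    simp only [c1, c2, s1, s2, dd]
    push_cast
    rw [Complex.cos]
    rw [show -2 * (n : ℂ) * Complex.I * (Real.pi / 2) = -(n * Real.pi) * Complex.I by ring,
      show -2 * (n : ℂ) * Complex.I * (-(Real.pi / 2)) = (n * Real.pi) * Complex.I by ring]
    rw [Complex.real_smul]
    push_cast
    field_simp
    ring
  · intro x _
    have h1 : HasDerivAt (fun x : ℂ => Complex.exp (-2 * n * Complex.I * x) *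
        (Complex.sin x - 2 * n * Complex.I * Complex.cos x) / (1 - 4 * (n : ℂ) ^ 2))
        (Complex.exp (-2 * n * Complex.I * x) * Complex.cos x) (x : ℂ) := by
      have h2 : HasDerivAt (fun x : ℂ => -2 * n * Complex.I * x) (-2 * n * Complex.I) (x : ℂ) := by
        simpa using (hasDerivAt_id (x : ℂ)).const_mul (-2 * n * Complex.I)
      have h3 := ((h2.cexp).mul ((Complex.hasDerivAt_sin (x : ℂ)).sub
        ((Complex.hasDerivAt_cos (x : ℂ)).const_mul (2 * n * Complex.I)))).div_const (1 - 4 * (n : ℂ) ^ 2)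
      refine h3.congr_deriv ?_
      rw [div_eq_iff hne]
      simp only [Pi.sub_apply]
      linear_combination (4 * (n : ℂ) ^ 2 * Complex.exp (-2 * n * Complex.I * x) * Complex.cos x) * Complex.I_sq
    exact h1.comp_ofReal
  · apply Continuous.intervalIntegrable
    fun_prop

lemma dd_zero : dd 0 = 2 / Real.pi := by simp [dd]

lemma dd_le {n : ℤ} (hn : n ≠ 0) : |dd n| ≤ |(n : ℝ)| ^ (-2 : ℝ) := by
  have h1 : (1 : ℝ) ≤ |(n : ℝ)| := by exact_mod_cast Int.one_le_abs hn
  have h2 : (1 : ℝ) ≤ (n : ℝ) ^ 2 := by rw [← sq_abs]; nlinarith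
  rw [Real.rpow_neg (abs_nonneg _)]
  norm_num [sq_abs]
  rw [dd, abs_div, abs_mul, abs_mul, abs_two, abs_of_pos Real.pi_pos, abs_of_neg (by linarith : 1 - 4 * (n : ℝ) ^ 2 < 0),
    inv_eq_one_div, div_le_div_iff₀ (by have := Real.pi_pos; apply mul_pos <;> linarith) (by linarith)]
  have := Real.abs_cos_le_one (n * Real.pi)
  have hp := Real.pi_gt_three
  nlinarith

lemma dd_summable : Summable fun n : ℤ => |dd n| := by
  refine Summable.of_norm_bounded_eventually (Real.summable_abs_int_rpow (b := 2) (by norm_num)) ?_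
  rw [Filter.eventually_cofinite]
  refine (Set.finite_singleton (0 : ℤ)).subset fun n hn => ?_
  by_contra h
  apply hn
  rw [Real.norm_eq_abs, abs_abs]
  exact dd_le h

lemma cos_series (x : ℝ) : HasSum (fun n : ℤ => dd n * Real.cos (2 * n * x)) |Real.cos x| := by
  have hs : Summable (fourierCoeff fc) := by
    refine Summable.of_norm (dd_summable.congr fun n => ?_)
    rw [fc_coeff, Complex.norm_real, Real.norm_eq_abs]
  have := Complex.hasSum_re (has_pointwise_sum_fourier_series_of_summable hs (x : AddCircle Real.pi))
  rw [fc_coe, Complex.ofReal_re] at this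
  refine this.congr_fun ?_
  intro n
  rw [fc_coeff, fourier_coe_apply, smul_eq_mul, Complex.re_ofReal_mul]
  congr 1
  have hpi : (Real.pi : ℂ) ≠ 0 := by exact_mod_cast Real.pi_ne_zero
  rw [show 2 * (Real.pi : ℂ) * Complex.I * n * x / Real.pi = ((2 * n * x : ℝ) : ℂ) * Complex.I by
    push_cast; field_simp]
  rw [Complex.exp_ofReal_mul_I_re]

end LP

namespace LP
open Filter Topology Metric

lemma abs_ap_series (k : ℤ) (p : Nat.Primes) : HasSum (fun n : ℤ => dd n * ap (2 * n * k) p) |ap k p| := by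
  have := (cos_series (k * th p)).mul_left (nu p)
  rw [ap, abs_mul, abs_of_nonneg (nu_nonneg p)]
  refine this.congr_fun fun n => ?_
  rw [ap]; push_cast; rw [← mul_assoc (2 * (n : ℝ)), ]; ring

lemma PR_diff_le (K : ℤ) {u v : ℝ} (hu : 1 < u) (huv : u ≤ v) : |PR K u - PR K v| ≤ PR 0 u - PR 0 v := by
  have hv : 1 < v := hu.trans_le huv
  have sK : ∀ w : ℝ, 1 < w → Summable fun p : Nat.Primes => ap K p * ((p : ℕ) : ℝ) ^ (-w) := fun w hw => by
    refine Summable.of_norm ((summable_absap K hw).congr fun p => ?_)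
    rw [Real.norm_eq_abs, abs_mul, abs_of_nonneg (show 0 ≤ ((p : ℕ) : ℝ) ^ (-w) by positivity)]
  rw [PR_real, PR_real, PR_zero_real, PR_zero_real, ← (sK u hu).tsum_sub (sK v hv),
    ← (summable_nu hu).tsum_sub (summable_nu hv)]
  have hb : ∀ p : Nat.Primes, ‖ap K p * ((p : ℕ) : ℝ) ^ (-u) - ap K p * ((p : ℕ) : ℝ) ^ (-v)‖ ≤
      nu p * ((p : ℕ) : ℝ) ^ (-u) - nu p * ((p : ℕ) : ℝ) ^ (-v) := by
    intro p
    have hd : 0 ≤ ((p : ℕ) : ℝ) ^ (-u) - ((p : ℕ) : ℝ) ^ (-v) := by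
      rw [sub_nonneg]
      exact Real.rpow_le_rpow_of_exponent_le (by exact_mod_cast p.2.one_lt.le) (by linarith)
    rw [← mul_sub, ← mul_sub, Real.norm_eq_abs, abs_mul, abs_of_nonneg hd]
    exact mul_le_mul_of_nonneg_right (abs_ap_le_nu K p) hd
  exact tsum_of_norm_bounded ((summable_nu hu).sub (summable_nu hv)).hasSum hb

lemma swap (k : ℤ) {u v : ℝ} (hu : 1 < u) (huv : u ≤ v) :
    ∑' p : Nat.Primes, |ap k p| * (((p : ℕ) : ℝ) ^ (-u) - ((p : ℕ) : ℝ) ^ (-v)) =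
      ∑' n : ℤ, dd n * (PR (2 * n * k) u - PR (2 * n * k) v) := by
  have hv : 1 < v := hu.trans_le huv
  have hd : ∀ p : Nat.Primes, 0 ≤ ((p : ℕ) : ℝ) ^ (-u) - ((p : ℕ) : ℝ) ^ (-v) := by
    intro p
    rw [sub_nonneg]
    exact Real.rpow_le_rpow_of_exponent_le (by exact_mod_cast p.2.one_lt.le) (by linarith)
  have sK : ∀ (K : ℤ) (w : ℝ), 1 < w → Summable fun p : Nat.Primes => ap K p * ((p : ℕ) : ℝ) ^ (-w) := fun K w hw => by
    refine Summable.of_norm ((summable_absap K hw).congr fun p => ?_)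
    rw [Real.norm_eq_abs, abs_mul, abs_of_nonneg (show 0 ≤ ((p : ℕ) : ℝ) ^ (-w) by positivity)]
  have h1 : ∀ n : ℤ, dd n * (PR (2 * n * k) u - PR (2 * n * k) v) =
      ∑' p : Nat.Primes, dd n * ap (2 * n * k) p * (((p : ℕ) : ℝ) ^ (-u) - ((p : ℕ) : ℝ) ^ (-v)) := by
    intro n
    rw [PR_real, PR_real, ← (sK _ u hu).tsum_sub (sK _ v hv), ← tsum_mul_left]
    refine tsum_congr fun p => by ring
  have h2 : ∀ p : Nat.Primes, |ap k p| * (((p : ℕ) : ℝ) ^ (-u) - ((p : ℕ) : ℝ) ^ (-v)) =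
      ∑' n : ℤ, dd n * ap (2 * n * k) p * (((p : ℕ) : ℝ) ^ (-u) - ((p : ℕ) : ℝ) ^ (-v)) := by
    intro p
    rw [tsum_mul_right, (abs_ap_series k p).tsum_eq]
  rw [tsum_congr h1, tsum_congr h2]
  apply Summable.tsum_comm (f := fun (n : ℤ) (p : Nat.Primes) =>
    dd n * ap (2 * n * k) p * (((p : ℕ) : ℝ) ^ (-u) - ((p : ℕ) : ℝ) ^ (-v)))
  have hs := dd_summable.mul_of_nonneg ((summable_nu hu).sub (summable_nu hv)) (fun n => abs_nonneg _)
    (fun p => by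
      have := mul_nonneg (nu_nonneg p) (hd p)
      rw [mul_sub] at this; exact this)
  refine Summable.of_norm_bounded hs ?_
  rintro ⟨n, p⟩
  simp only [Function.uncurry]
  rw [norm_mul, norm_mul, Real.norm_eq_abs, Real.norm_eq_abs, Real.norm_eq_abs, abs_of_nonneg (hd p), ← mul_sub,
    mul_assoc]
  gcongr
  · exact hd p
  · exact abs_ap_le_nu _ p

lemma main_upper : ∃ C c0 : ℝ, 0 < c0 ∧ c0 ≤ 1 / 8 ∧ ∀ k : ℤ, k ≠ 0 → 4 ∣ k → ∀ σ : ℝ, 1 < σ →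
    σ ≤ 1 + c0 / (Real.log |(k : ℝ)|) ^ 2 →
    ∑' n : ℕ, ‖a k n‖ * (n : ℝ) ^ (-σ) ≤ Real.exp (C + 2 * Real.log (Real.log |(k : ℝ)|) +
      (2 / Real.pi) * (Real.log (1 / (σ - 1)) - 2 * Real.log (Real.log |(k : ℝ)|))) := by
  obtain ⟨CE, c0, hCE, hc00, hc01, hE⟩ := lemE
  obtain ⟨C1, hC1, hP⟩ := PR_zero
  set B := CE + 2 * C1 + 6 with hB
  set T := ∑' n : ℤ, B * |(n : ℝ)| ^ (-(3 / 2) : ℝ) with hT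
  refine ⟨T + C0 + (2 / Real.pi) * (2 * C1) + C1 + |Real.log (1 / c0)| * (1 + 2 / Real.pi), c0, hc00, hc01, ?_⟩
  intro k hk h4 σ hσ1 hσ2
  obtain ⟨hΛ, hk4⟩ := log_K_ge hk h4
  set Λ := Real.log |(k : ℝ)| with hΛd
  have hΛ0 : 0 < Λ := by linarith
  set y := 1 + c0 / Λ ^ 2 with hy
  have hyp : 0 < c0 / Λ ^ 2 := by positivity
  have hy1 : 1 < y := by rw [hy]; linarith
  have hyle : ∀ L : ℝ, 1 ≤ L → c0 / L ^ 2 ≤ 1 / 8 := by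
    intro L hL
    rw [div_le_iff₀ (by positivity)]; nlinarith
  have lY : ∀ L : ℝ, 1 ≤ L → Real.log (1 / (1 + c0 / L ^ 2 - 1)) = Real.log (1 / c0) + 2 * Real.log L := by
    intro L hL
    have : 0 < L := by linarith
    rw [add_sub_cancel_left, one_div_div, Real.log_div (by positivity) (by positivity), Real.log_pow,
      Real.log_div one_ne_zero (by positivity), Real.log_one]; push_cast; ring
  -- bound for n ≠ 0
  have hΔ : ∀ n : ℤ, n ≠ 0 → |PR (2 * n * k) σ - PR (2 * n * k) y| ≤ B * |(n : ℝ)| ^ (1 / 2 : ℝ) := by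
    intro n hn
    set K := 2 * n * k with hKd
    have hK : K ≠ 0 := by simp [hKd, hn, hk]
    have hK4 : 4 ∣ K := Dvd.dvd.mul_left h4 _
    have hn1 : (1 : ℝ) ≤ |(n : ℝ)| := by exact_mod_cast Int.one_le_abs hn
    obtain ⟨hL1, _⟩ := log_K_ge hK hK4
    set L := Real.log |(K : ℝ)| with hL
    have eL : L = Real.log 2 + Real.log |(n : ℝ)| + Λ := by
      rw [hL, hKd]; push_cast
      rw [abs_mul, abs_mul, abs_two, Real.log_mul (by positivity) (by positivity),
        Real.log_mul (by positivity) (by positivity)]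
    have hln : 0 ≤ Real.log |(n : ℝ)| := Real.log_nonneg hn1
    have hl2 : 0 ≤ Real.log 2 := Real.log_nonneg (by norm_num)
    have hLΛ : Λ ≤ L := by linarith
    have hyK : c0 / L ^ 2 ≤ c0 / Λ ^ 2 := by gcongr
    have hLpos : 0 < c0 / L ^ 2 := by positivity
    set yK := 1 + c0 / L ^ 2 with hyKd
    have hd0 : PR 0 yK - PR 0 y ≤ 2 * C1 + 2 * (Real.log 2 + Real.log |(n : ℝ)|) := by
      have p1 := (abs_le.mp (hP yK (by linarith) (by linarith [hyle L hL1]))).2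
      have p2 := (abs_le.mp (hP y (by linarith) (by linarith [hyle Λ hΛ]))).1
      rw [hyKd, lY L hL1] at p1
      rw [hy, lY Λ hΛ] at p2
      have : Real.log L - Real.log Λ ≤ Real.log 2 + Real.log |(n : ℝ)| := by
        rw [← Real.log_div (by positivity) (by positivity)]
        refine (Real.log_le_sub_one_of_pos (by positivity)).trans ?_
        rw [sub_le_iff_le_add, div_le_iff₀ hΛ0, eL]
        nlinarith
      rw [hyKd, hy]; linarith
    have hsq : (1 : ℝ) ≤ |(n : ℝ)| ^ (1 / 2 : ℝ) := Real.one_le_rpow hn1 (by norm_num)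
    have hlog : Real.log |(n : ℝ)| ≤ 2 * |(n : ℝ)| ^ (1 / 2 : ℝ) := by
      have := Real.log_le_rpow_div (abs_nonneg (n : ℝ)) (show (0 : ℝ) < 1 / 2 by norm_num)
      linarith
    have hl2' : Real.log 2 ≤ 1 := by linarith [Real.log_two_lt_d9]
    have hfin : CE + (2 * C1 + 2 * (Real.log 2 + Real.log |(n : ℝ)|)) ≤ B * |(n : ℝ)| ^ (1 / 2 : ℝ) := by
      rw [hB]; nlinarith
    refine le_trans ?_ hfin
    rcases le_total σ yK with h | h
    · have a1 := hE K hK hK4 σ hσ1 h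
      have a2 := PR_diff_le K (u := yK) (v := y) (by linarith) (by linarith)
      have := abs_sub_le (PR K σ) (PR K yK) (PR K y)
      linarith
    · have a1 := PR_diff_le K hσ1 hσ2
      have a2 := (abs_nonneg _).trans (PR_diff_le 0 (u := yK) (v := σ) (by linarith) h)
      linarith
  have sT : Summable fun n : ℤ => B * |(n : ℝ)| ^ (-(3 / 2) : ℝ) :=
    (Real.summable_abs_int_rpow (by norm_num)).mul_left B
  have hB0 : 0 ≤ B := by positivity
  have hterm : ∀ n : ℤ, n ≠ 0 → |dd n * (PR (2 * n * k) σ - PR (2 * n * k) y)| ≤ B * |(n : ℝ)| ^ (-(3 / 2) : ℝ) := by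
    intro n hn
    have hn1 : (1 : ℝ) ≤ |(n : ℝ)| := by exact_mod_cast Int.one_le_abs hn
    rw [abs_mul]
    calc _ ≤ |(n : ℝ)| ^ (-2 : ℝ) * (B * |(n : ℝ)| ^ (1 / 2 : ℝ)) := by
          gcongr
          · exact dd_le hn
          · exact hΔ n hn
      _ = B * (|(n : ℝ)| ^ (-2 : ℝ) * |(n : ℝ)| ^ (1 / 2 : ℝ)) := by ring
      _ = _ := by rw [← Real.rpow_add (by linarith)]; norm_num
  have hsum : Summable fun n : ℤ => dd n * (PR (2 * n * k) σ - PR (2 * n * k) y) := by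
    refine Summable.of_norm_bounded_eventually sT ?_
    rw [Filter.eventually_cofinite]
    refine (Set.finite_singleton (0 : ℤ)).subset fun n hn => ?_
    by_contra h
    exact hn (hterm n h)
  have hmain : ∑' p : Nat.Primes, |ap k p| * (((p : ℕ) : ℝ) ^ (-σ) - ((p : ℕ) : ℝ) ^ (-y)) ≤
      (2 / Real.pi) * (PR 0 σ - PR 0 y) + T := by
    rw [swap k hσ1 hσ2]
    have sI : Summable fun n : ℤ => if n = 0 then (2 / Real.pi) * (PR 0 σ - PR 0 y) else 0 :=
      (hasSum_ite_eq (0 : ℤ) _).summable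
    calc _ ≤ ∑' n : ℤ, ((if n = 0 then (2 / Real.pi) * (PR 0 σ - PR 0 y) else 0) + B * |(n : ℝ)| ^ (-(3 / 2) : ℝ)) := by
          refine hsum.tsum_le_tsum (fun n => ?_) (sI.add sT)
          by_cases h : n = 0
          · subst h
            have : 0 ≤ B * |((0 : ℤ) : ℝ)| ^ (-(3 / 2) : ℝ) := by positivity
            simp only [dd_zero, if_true, mul_zero, zero_mul]
            linarith
          · simp only [h, if_false, zero_add]
            exact (le_abs_self _).trans (hterm n h)
      _ = _ := by rw [sI.tsum_add sT, tsum_ite_eq]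
  have hsplit : ∑' p : Nat.Primes, |ap k p| * ((p : ℕ) : ℝ) ^ (-σ) ≤
      (2 / Real.pi) * (PR 0 σ - PR 0 y) + T + PR 0 y := by
    have e : ∑' p : Nat.Primes, |ap k p| * (((p : ℕ) : ℝ) ^ (-σ) - ((p : ℕ) : ℝ) ^ (-y)) =
        ∑' p : Nat.Primes, |ap k p| * ((p : ℕ) : ℝ) ^ (-σ) - ∑' p : Nat.Primes, |ap k p| * ((p : ℕ) : ℝ) ^ (-y) := by
      rw [← (summable_absap k hσ1).tsum_sub (summable_absap k hy1)]
      exact tsum_congr fun p => by ring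
    have : ∑' p : Nat.Primes, |ap k p| * ((p : ℕ) : ℝ) ^ (-y) ≤ PR 0 y := by
      rw [PR_zero_real]
      refine (summable_absap k hy1).tsum_le_tsum (fun p => ?_) (summable_nu hy1)
      exact mul_le_mul_of_nonneg_right (abs_ap_le_nu k p) (by positivity)
    linarith
  refine (g_euler h4 hσ1).trans (Real.exp_le_exp.mpr ?_)
  have p1 := (abs_le.mp (hP σ hσ1 (by linarith [hyle Λ hΛ]))).2
  have p2 := abs_le.mp (hP y (by linarith) (by linarith [hyle Λ hΛ]))
  rw [hy, lY Λ hΛ, ← hy] at p2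
  have hpi : 0 < 2 / Real.pi := by positivity
  have q1 : (2 / Real.pi) * (PR 0 σ - PR 0 y) ≤ (2 / Real.pi) * (2 * C1 + |Real.log (1 / c0)| +
      (Real.log (1 / (σ - 1)) - 2 * Real.log Λ)) := by
    refine mul_le_mul_of_nonneg_left ?_ hpi.le
    linarith [p2.1, neg_abs_le (Real.log (1 / c0))]
  have q2 := le_abs_self (Real.log (1 / c0))
  linarith [p2.2]

end LP

namespace LP
open Filter Topology Finset

noncomputable def AV (v : ℕ) : ℝ := (v : ℝ) * (v + 1) * 4 * (1 / 2) ^ v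
noncomputable def BP (p : ℕ) : ℝ := 2 * (p : ℝ) ^ (-(3 / 2) : ℝ)

lemma AV_nonneg (v : ℕ) : 0 ≤ AV v := by unfold AV; positivity
lemma BP_nonneg (v : ℕ) : 0 ≤ BP v := by unfold BP; positivity

lemma AV_summable : Summable AV := by
  have h1 := summable_pow_mul_geometric_of_norm_lt_one (R := ℝ) 2 (r := 1 / 2) (by norm_num)
  have h2 := summable_pow_mul_geometric_of_norm_lt_one (R := ℝ) 1 (r := 1 / 2) (by norm_num)
  refine ((h1.add h2).mul_left 4).congr fun v => ?_
  unfold AV; ring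

lemma BP_summable : Summable BP := (Real.summable_nat_rpow.mpr (by norm_num)).mul_left 2

lemma term_le {N m p v : ℕ} (hm : 1 ≤ m) (hp : 2 ≤ p) (hv : 2 ≤ v) (h : m * p ^ v ≤ N) :
    (v : ℝ) * (v + 1) * Real.log p ≤ (N : ℝ) / m * (AV v * BP p) := by
  have hp0 : (0 : ℝ) < p := by positivity
  have hp2 : (2 : ℝ) ≤ p := by exact_mod_cast hp
  have hm0 : (0 : ℝ) < m := by positivity
  have h' : (m : ℝ) * (p : ℝ) ^ v ≤ N := by exact_mod_cast h
  have h1 : (p : ℝ) ^ v ≤ N / m := by rw [le_div_iff₀ hm0]; linarith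
  have hlog : Real.log p ≤ 2 * (p : ℝ) ^ (1 / 2 : ℝ) := by
    have := Real.log_le_rpow_div hp0.le (show (0 : ℝ) < 1 / 2 by norm_num)
    linarith
  have key : (p : ℝ) ^ (1 / 2 : ℝ) ≤ N / m * (4 * (1 / 2) ^ v * (p : ℝ) ^ (-(3 / 2) : ℝ)) := by
    obtain ⟨w, rfl⟩ := Nat.exists_eq_add_of_le hv
    have e1 : (p : ℝ) ^ (1 / 2 : ℝ) = (p : ℝ) ^ 2 * (p : ℝ) ^ (-(3 / 2) : ℝ) := by
      rw [← Real.rpow_natCast, ← Real.rpow_add hp0]; norm_num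
    have e2 : (4 : ℝ) * (1 / 2) ^ (2 + w) = (1 / 2) ^ w := by rw [pow_add]; norm_num; ring
    rw [e1, e2, ← mul_assoc]
    gcongr
    calc (p : ℝ) ^ 2 = (p : ℝ) ^ 2 * (2 ^ w * (1 / 2) ^ w) := by rw [← mul_pow]; norm_num
      _ ≤ (p : ℝ) ^ 2 * ((p : ℝ) ^ w * (1 / 2) ^ w) := by gcongr
      _ = (p : ℝ) ^ (2 + w) * (1 / 2) ^ w := by rw [pow_add]; ring
      _ ≤ _ := by gcongr
  calc (v : ℝ) * (v + 1) * Real.log p ≤ (v : ℝ) * (v + 1) * (2 * (p : ℝ) ^ (1 / 2 : ℝ)) := by gcongr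
    _ ≤ (v : ℝ) * (v + 1) * (2 * (N / m * (4 * (1 / 2) ^ v * (p : ℝ) ^ (-(3 / 2) : ℝ)))) := by gcongr
    _ = _ := by unfold AV BP; ring

noncomputable def CH : ℝ := 2 * Real.log 4 + (∑' v, AV v) * ∑' p, BP p

lemma CH_nonneg : 0 ≤ CH := by
  have h1 : 0 ≤ Real.log 4 := Real.log_nonneg (by norm_num)
  have h2 : 0 ≤ ∑' v, AV v := tsum_nonneg AV_nonneg
  have h3 : 0 ≤ ∑' v, BP v := tsum_nonneg BP_nonneg
  unfold CH; positivity

lemma theta_part (N m : ℕ) (hm : 1 ≤ m) :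
    ∑ p ∈ (Icc 1 N).filter Nat.Prime, (if m * p ≤ N then 2 * Real.log p else 0) ≤ 2 * Real.log 4 * ((N : ℝ) / m) := by
  have hm0 : (0 : ℝ) < m := by positivity
  have := Chebyshev.theta_le_log4_mul_x (x := (N : ℝ) / m) (by positivity)
  rw [Chebyshev.theta] at this
  rw [← sum_filter, ← mul_sum, mul_assoc]
  gcongr
  refine le_trans (sum_le_sum_of_subset_of_nonneg ?_ ?_) this
  · intro p hp
    simp only [mem_filter, mem_Icc, mem_Ioc] at hp ⊢
    refine ⟨⟨hp.1.2.pos, ?_⟩, hp.1.2⟩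
    apply Nat.le_floor
    rw [le_div_iff₀ hm0]
    have : ((m * p : ℕ) : ℝ) ≤ N := by exact_mod_cast hp.2
    push_cast at this; linarith
  · intro p _ _
    exact Real.log_natCast_nonneg p

lemma D_bound (N m : ℕ) (hm : 1 ≤ m) :
    ∑ p ∈ (Icc 1 N).filter Nat.Prime, ∑ v ∈ Icc 1 N,
      (if m * p ^ v ≤ N then (v : ℝ) * (v + 1) * Real.log p else 0) ≤ CH * ((N : ℝ) / m) := by
  have hm0 : (0 : ℝ) < m := by positivity
  have hstep : ∀ p ∈ (Icc 1 N).filter Nat.Prime, ∑ v ∈ Icc 1 N,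
      (if m * p ^ v ≤ N then (v : ℝ) * (v + 1) * Real.log p else 0) ≤
      (if m * p ≤ N then 2 * Real.log p else 0) + (N : ℝ) / m * (∑' v, AV v) * BP p := by
    intro p hp
    simp only [mem_filter, mem_Icc] at hp
    have hN : 1 ∈ Icc 1 N := by simp; omega
    rw [← add_sum_erase _ _ hN]
    refine add_le_add ?_ ?_
    · simp only [pow_one, Nat.cast_one]
      split_ifs
      · norm_num
      · exact le_rfl
    · calc _ ≤ ∑ v ∈ (Icc 1 N).erase 1, (N : ℝ) / m * (AV v * BP p) := by
            refine sum_le_sum fun v hv => ?_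
            simp only [mem_erase, mem_Icc] at hv
            split_ifs with h
            · exact term_le hm hp.2.two_le (by omega) h
            · have := AV_nonneg v; have := BP_nonneg p; positivity
        _ = (N : ℝ) / m * (∑ v ∈ (Icc 1 N).erase 1, AV v) * BP p := by
            rw [← mul_sum, ← sum_mul, mul_assoc]
        _ ≤ _ := by
            have := BP_nonneg p
            gcongr
            exact AV_summable.sum_le_tsum _ fun v _ => AV_nonneg v
  refine (sum_le_sum hstep).trans ?_
  rw [sum_add_distrib, ← mul_sum]
  have h1 := theta_part N m hm
  have h2 : (N : ℝ) / m * (∑' v, AV v) * ∑ p ∈ (Icc 1 N).filter Nat.Prime, BP p ≤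
      (N : ℝ) / m * (∑' v, AV v) * ∑' p, BP p := by
    have : 0 ≤ ∑' v, AV v := tsum_nonneg AV_nonneg
    gcongr
    exact BP_summable.sum_le_tsum _ fun v _ => BP_nonneg v
  unfold CH
  linarith

variable {g : ℕ → ℝ}

lemma g_log (h0 : ∀ n, 0 ≤ g n) (hmul : ∀ m n, Nat.Coprime m n → g (m * n) = g m * g n)
    (hpp : ∀ p e : ℕ, p.Prime → g (p ^ e) ≤ e + 1) (N : ℕ) :
    ∑ n ∈ Icc 1 N, g n * Real.log n ≤ CH * N * ∑ m ∈ Icc 1 N, g m / m := by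
  have h1 : ∀ n ∈ Icc 1 N, g n * Real.log n ≤ ∑ p ∈ n.primeFactors,
      g (n / p ^ n.factorization p) * ((n.factorization p : ℝ) * (n.factorization p + 1) * Real.log p) := by
    intro n hn
    rw [mem_Icc] at hn
    have hn0 : n ≠ 0 := by omega
    have e1 : Real.log n = ∑ p ∈ n.primeFactors, (n.factorization p : ℝ) * Real.log p := by
      conv_lhs => rw [← Nat.prod_factorization_pow_eq_self hn0]
      rw [Finsupp.prod, Nat.support_factorization]
      push_cast
      rw [Real.log_prod]
      · exact sum_congr rfl fun p _ => by rw [Real.log_pow]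
      · intro p hp
        have := (Nat.prime_of_mem_primeFactors hp).pos
        positivity
    rw [e1, mul_sum]
    refine sum_le_sum fun p hp => ?_
    have hpr := Nat.prime_of_mem_primeFactors hp
    have e2 : g n = g (p ^ n.factorization p) * g (n / p ^ n.factorization p) := by
      rw [← hmul _ _ ((Nat.coprime_ordCompl hpr hn0).pow_left _), Nat.ordProj_mul_ordCompl_eq_self]
    have e3 := hpp p (n.factorization p) hpr
    rw [e2]
    have hl := Real.log_natCast_nonneg p
    have hg := h0 (n / p ^ n.factorization p)
    calc _ = g (p ^ n.factorization p) * (g (n / p ^ n.factorization p) * (n.factorization p * Real.log p)) := by ring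
      _ ≤ (n.factorization p + 1) * (g (n / p ^ n.factorization p) * (n.factorization p * Real.log p)) := by gcongr
      _ = _ := by ring
  refine (sum_le_sum h1).trans ?_
  rw [sum_sigma']
  set T : ℕ × ℕ × ℕ → ℝ := fun x => if x.1 * x.2.1 ^ x.2.2 ≤ N then g x.1 * ((x.2.2 : ℝ) * (x.2.2 + 1) * Real.log x.2.1) else 0
    with hT
  have hT0 : ∀ x, 0 ≤ T x := by
    intro x
    simp only [hT]
    split_ifs
    · have := h0 x.1
      have := Real.log_natCast_nonneg x.2.1
      positivity
    · exact le_rfl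
  set ι : (Σ _ : ℕ, ℕ) → ℕ × ℕ × ℕ := fun x => (x.1 / x.2 ^ x.1.factorization x.2, x.2, x.1.factorization x.2) with hι
  have hinj : Set.InjOn ι ((Icc 1 N).sigma fun n => n.primeFactors : Finset (Σ _ : ℕ, ℕ)) := by
    rintro ⟨n, p⟩ _ ⟨n', p'⟩ _ h
    simp only [hι, Prod.mk.injEq] at h
    obtain ⟨a1, a2, a3⟩ := h
    subst a2
    have : n = n' := by
      rw [← Nat.ordProj_mul_ordCompl_eq_self n p, ← Nat.ordProj_mul_ordCompl_eq_self n' p, a1, a3]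
    subst this; rfl
  have hle : ∀ x ∈ (Icc 1 N).sigma fun n => n.primeFactors,
      g (x.1 / x.2 ^ x.1.factorization x.2) * ((x.1.factorization x.2 : ℝ) * (x.1.factorization x.2 + 1) * Real.log x.2) =
      T (ι x) := by
    rintro ⟨n, p⟩ hx
    simp only [mem_sigma, mem_Icc] at hx
    simp only [hT, hι]
    rw [if_pos]
    rw [mul_comm, Nat.ordProj_mul_ordCompl_eq_self]; exact hx.1.2
  rw [sum_congr rfl hle, ← sum_image (f := T) hinj]
  have hsub : ((Icc 1 N).sigma fun n => n.primeFactors).image ι ⊆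
      Icc 1 N ×ˢ ((Icc 1 N).filter Nat.Prime ×ˢ Icc 1 N) := by
    intro x hx
    rw [mem_image] at hx
    obtain ⟨⟨n, p⟩, hnp, rfl⟩ := hx
    simp only [mem_sigma, mem_Icc] at hnp
    have hpr := Nat.prime_of_mem_primeFactors hnp.2
    have hdv := Nat.dvd_of_mem_primeFactors hnp.2
    have hn0 : n ≠ 0 := by omega
    simp only [hι, mem_product, mem_Icc, mem_filter]
    refine ⟨⟨Nat.ordCompl_pos p hn0, (Nat.div_le_self _ _).trans hnp.1.2⟩,
      ⟨⟨hpr.pos, (Nat.le_of_dvd (by omega) hdv).trans hnp.1.2⟩, hpr⟩, ?_, ?_⟩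
    · exact (hpr.factorization_pos_of_dvd hn0 hdv)
    · exact ((Nat.factorization_lt p hn0).le).trans hnp.1.2
  refine (sum_le_sum_of_subset_of_nonneg hsub fun x _ _ => hT0 x).trans ?_
  rw [sum_product, mul_sum]
  refine sum_le_sum fun m hm => ?_
  rw [mem_Icc] at hm
  rw [sum_product]
  have := mul_le_mul_of_nonneg_left (D_bound N m hm.1) (h0 m)
  refine le_trans (le_of_eq ?_) (this.trans (le_of_eq (by ring)))
  rw [mul_sum]
  refine sum_congr rfl fun p _ => ?_
  rw [mul_sum]
  refine sum_congr rfl fun v _ => ?_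
  simp only [hT]
  split_ifs <;> simp

lemma HT (h0 : ∀ n, 0 ≤ g n) (hmul : ∀ m n, Nat.Coprime m n → g (m * n) = g m * g n)
    (hpp : ∀ p e : ℕ, p.Prime → g (p ^ e) ≤ e + 1) {X : ℝ} (hX : 3 ≤ X)
    (hs : Summable fun n : ℕ => g n * (n : ℝ) ^ (-(1 + 1 / Real.log X))) :
    Real.log X * ∑ n ∈ Icc 1 ⌊X⌋₊, g n ≤
      (CH + 1) * X * (Real.exp 1 * ∑' n : ℕ, g n * (n : ℝ) ^ (-(1 + 1 / Real.log X))) := by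
  have hX0 : 0 < X := by linarith
  have hlX : 0 < Real.log X := Real.log_pos (by linarith)
  set N := ⌊X⌋₊ with hN
  have hNX : (N : ℝ) ≤ X := Nat.floor_le hX0.le
  have hQ0 : 0 ≤ ∑ m ∈ Icc 1 N, g m / m := sum_nonneg fun m _ => div_nonneg (h0 m) (by positivity)
  have h1 := g_log h0 hmul hpp N
  have h2 : ∑ n ∈ Icc 1 N, g n * (Real.log X - Real.log n) ≤ X * ∑ m ∈ Icc 1 N, g m / m := by
    rw [mul_sum]
    refine sum_le_sum fun n hn => ?_
    rw [mem_Icc] at hn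
    have hn0 : (0 : ℝ) < n := by exact_mod_cast hn.1
    rw [← Real.log_div hX0.ne' hn0.ne']
    have := Real.log_le_sub_one_of_pos (div_pos hX0 hn0)
    calc _ ≤ g n * (X / n) := mul_le_mul_of_nonneg_left (by linarith) (h0 n)
      _ = _ := by ring
  have h3 : CH * N * ∑ m ∈ Icc 1 N, g m / m ≤ CH * X * ∑ m ∈ Icc 1 N, g m / m := by
    have := CH_nonneg
    gcongr
  have h4 : Real.log X * ∑ n ∈ Icc 1 N, g n ≤ (CH + 1) * X * ∑ m ∈ Icc 1 N, g m / m := by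
    have e : Real.log X * ∑ n ∈ Icc 1 N, g n = ∑ n ∈ Icc 1 N, g n * (Real.log X - Real.log n) +
        ∑ n ∈ Icc 1 N, g n * Real.log n := by
      rw [← sum_add_distrib, mul_sum]
      exact sum_congr rfl fun n _ => by ring
    rw [e]; linarith
  refine h4.trans ?_
  have hCH := CH_nonneg
  gcongr
  calc _ ≤ ∑ n ∈ Icc 1 N, Real.exp 1 * (g n * (n : ℝ) ^ (-(1 + 1 / Real.log X))) := by
        refine sum_le_sum fun n hn => ?_
        rw [mem_Icc] at hn
        have hn0 : (0 : ℝ) < n := by exact_mod_cast hn.1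
        have hnX : (n : ℝ) ≤ X := (Nat.cast_le.mpr hn.2).trans hNX
        have : (1 : ℝ) / n ≤ Real.exp 1 * (n : ℝ) ^ (-(1 + 1 / Real.log X)) := by
          rw [neg_add, Real.rpow_add hn0, Real.rpow_neg_one, one_div, mul_left_comm]
          refine le_mul_of_one_le_right (by positivity) ?_
          rw [Real.rpow_def_of_pos hn0, ← Real.exp_add]
          apply Real.one_le_exp
          have : Real.log n / Real.log X ≤ 1 := by
            rw [div_le_one hlX]; exact Real.log_le_log hn0 hnX
          have e : Real.log n * -(1 / Real.log X) = -(Real.log n / Real.log X) := by ring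
          rw [e]; linarith
        calc g n / n = g n * (1 / n) := by ring
          _ ≤ g n * (Real.exp 1 * (n : ℝ) ^ (-(1 + 1 / Real.log X))) := mul_le_mul_of_nonneg_left this (h0 n)
          _ = _ := by ring
    _ = Real.exp 1 * ∑ n ∈ Icc 1 N, (g n * (n : ℝ) ^ (-(1 + 1 / Real.log X))) := by rw [mul_sum]
    _ ≤ _ := by
        gcongr
        exact hs.sum_le_tsum _ fun n _ => mul_nonneg (h0 n) (by positivity)

end LP


theorem mean_absS_bound :
    ∃ C > (0 : ℝ), ∃ b > (0 : ℝ), ∃ X₀ : ℝ, ∀ k : ℤ, k ≠ 0 → 4 ∣ k →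
      ∀ X : ℝ, X₀ ≤ X → Real.log |(k : ℝ)| ≤ b * Real.sqrt (Real.log X) →
        (1 / X) * ∑ m ∈ Finset.Icc 1 ⌊X⌋₊, ‖latticeS m k‖ ≤
          C * ((Real.log |(k : ℝ)|) ^ 2 / Real.log X) ^ (1 - 2 / Real.pi) := by
  obtain ⟨C, c0, hc0, hc1, hU⟩ := LP.main_upper
  have hCH := LP.CH_nonneg
  refine ⟨4 * (LP.CH + 1) * Real.exp 1 * Real.exp C, by positivity, Real.sqrt c0, Real.sqrt_pos.mpr hc0, 3, ?_⟩
  intro k hk h4 X hX hcond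
  have hX0 : 0 < X := by linarith
  have hlX : 0 < Real.log X := Real.log_pos (by linarith)
  obtain ⟨hΛ, _⟩ := LP.log_K_ge hk h4
  set Λ := Real.log |(k : ℝ)| with hΛd
  have hΛ0 : 0 < Λ := by linarith
  have hΛ2 : Λ ^ 2 ≤ c0 * Real.log X := by
    have := pow_le_pow_left₀ hΛ0.le hcond 2
    rwa [mul_pow, Real.sq_sqrt hc0.le, Real.sq_sqrt hlX.le] at this
  have hσ : 1 < 1 + 1 / Real.log X := by
    have : 0 < 1 / Real.log X := by positivity
    linarith
  have hu := hU k hk h4 (1 + 1 / Real.log X) hσ (by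
    have : 1 / Real.log X ≤ c0 / Λ ^ 2 := by
      rw [div_le_div_iff₀ hlX (by positivity)]; linarith
    linarith)
  have hT := LP.HT (g := fun n => ‖LP.a k n‖) (fun n => _root_.norm_nonneg _)
    (fun m n h => by simp only [LP.a_mul k h, norm_mul]) (fun p e hp => LP.norm_a_pow_le k hp e) hX
    (LP.summable_g k hσ)
  have hsum : ∑ m ∈ Finset.Icc 1 ⌊X⌋₊, ‖latticeS m k‖ = 4 * ∑ m ∈ Finset.Icc 1 ⌊X⌋₊, ‖LP.a k m‖ := by
    rw [Finset.mul_sum]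
    refine Finset.sum_congr rfl fun m hm => ?_
    rw [LP.S_eq_a m (by rw [Finset.mem_Icc] at hm; omega), norm_mul]
    norm_num
  rw [hsum]
  set Z := ∑ m ∈ Finset.Icc 1 ⌊X⌋₊, ‖LP.a k m‖ with hZ
  have e1 : Real.log (1 / (1 + 1 / Real.log X - 1)) = Real.log (Real.log X) := by
    rw [add_sub_cancel_left, one_div_one_div]
  rw [e1] at hu
  have e2 : Real.exp (C + 2 * Real.log Λ + (2 / Real.pi) * (Real.log (Real.log X) - 2 * Real.log Λ)) =
      Real.log X * (Real.exp C * (Λ ^ 2 / Real.log X) ^ (1 - 2 / Real.pi)) := by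
    rw [Real.rpow_def_of_pos (by positivity), Real.log_div (by positivity) hlX.ne', Real.log_pow]
    conv_rhs => rw [← Real.exp_log hlX]
    rw [← Real.exp_add, ← Real.exp_add, Real.log_exp]
    congr 1
    push_cast; ring
  rw [e2] at hu
  have h5 : Real.log X * Z ≤ Real.log X * ((LP.CH + 1) * X * (Real.exp 1 *
      (Real.exp C * (Λ ^ 2 / Real.log X) ^ (1 - 2 / Real.pi)))) := by
    refine hT.trans ?_
    calc _ ≤ (LP.CH + 1) * X * (Real.exp 1 * (Real.log X * (Real.exp C * (Λ ^ 2 / Real.log X) ^ (1 - 2 / Real.pi)))) := by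
          gcongr
      _ = _ := by ring
  have h6 := le_of_mul_le_mul_left h5 hlX
  rw [one_div, inv_mul_le_iff₀ hX0]
  linarith
end

section
/- For every integer k divisible by 4, the function f_k(m) = |S(m,k)|/4 is multiplicative on the positive integers: f_k(1) = 1 and f_k(mn) = f_k(m)·f_k(n) whenever gcd(m,n) = 1. Moreover f_k(m) ≤ r(m)/4 for every m ≥ 1. -/
namespace LatticeAux

/-- Gaussian integers of norm `m`. -/
noncomputable def G (m : ℕ) : Finset GaussianInt :=
  (latticeCircle m).map ⟨fun p => (⟨p.1, p.2⟩ : GaussianInt), by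
    rintro ⟨a, b⟩ ⟨c, d⟩ h
    simpa [Zsqrtd.ext_iff] using h⟩

lemma mem_G (m : ℕ) (z : GaussianInt) : z ∈ G m ↔ z.norm = m := by
  obtain ⟨x, y⟩ := z
  simp only [G, Finset.mem_map, latticeCircle, Finset.mem_filter,
    Finset.mem_product, Finset.mem_Icc, Zsqrtd.norm_def, Prod.exists]
  constructor
  · rintro ⟨a, b, ⟨_, h⟩, h2⟩
    have e1 : a = x := (Zsqrtd.ext_iff.1 h2).1
    have e2 : b = y := (Zsqrtd.ext_iff.1 h2).2
    subst e1 e2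
    linarith
  · intro h
    refine ⟨x, y, ⟨⟨⟨?_, ?_⟩, ⟨?_, ?_⟩⟩, by linarith⟩, rfl⟩
    · have := Int.le_self_sq (-x); nlinarith [mul_self_nonneg x, mul_self_nonneg y]
    · have := Int.le_self_sq x; nlinarith [mul_self_nonneg x, mul_self_nonneg y]
    · have := Int.le_self_sq (-y); nlinarith [mul_self_nonneg x, mul_self_nonneg y]
    · have := Int.le_self_sq y; nlinarith [mul_self_nonneg x, mul_self_nonneg y]

lemma card_G_one : (G 1).card = 4 := by
  rw [G, Finset.card_map]
  unfold latticeCircle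
  decide

noncomputable def chi (k : ℤ) (z : GaussianInt) : ℂ :=
  (GaussianInt.toComplex z / (‖GaussianInt.toComplex z‖ : ℂ)) ^ k

lemma chi_mul (k : ℤ) (z w : GaussianInt) : chi k (z * w) = chi k z * chi k w := by
  unfold chi
  rw [map_mul, norm_mul, ← mul_zpow]
  congr 1
  push_cast
  ring

lemma exp_theta (k : ℤ) (u : ℤ × ℤ) (hu : (⟨u.1, u.2⟩ : GaussianInt) ≠ 0) :
    Complex.exp ((k : ℂ) * (latticeTheta u : ℂ) * Complex.I) = chi k ⟨u.1, u.2⟩ := by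
  have h0 : GaussianInt.toComplex ⟨u.1, u.2⟩ ≠ 0 := by
    simpa only [ne_eq, GaussianInt.toComplex_eq_zero] using hu
  unfold chi
  rw [mul_assoc, Complex.exp_int_mul]
  congr 1
  have hn : ((‖GaussianInt.toComplex ⟨u.1, u.2⟩‖ : ℝ) : ℂ) ≠ 0 := by
    simpa only [ne_eq, Complex.ofReal_eq_zero, norm_eq_zero] using h0
  rw [eq_div_iff hn, mul_comm]
  have key := Complex.norm_mul_exp_arg_mul_I (GaussianInt.toComplex ⟨u.1, u.2⟩)
  have hd := GaussianInt.toComplex_def' u.1 u.2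
  unfold latticeTheta
  rw [← hd]
  split_ifs
  · exact key
  · push_cast
    rw [add_mul, Complex.exp_add, Complex.exp_two_pi_mul_I, mul_one]
    exact key

lemma S_eq (m : ℕ) (hm : 0 < m) (k : ℤ) : latticeS m k = ∑ z ∈ G m, chi k z := by
  unfold latticeS
  rw [G, Finset.sum_map]
  refine Finset.sum_congr rfl fun u hu => exp_theta k u ?_
  intro h
  have : (⟨u.1, u.2⟩ : GaussianInt) ∈ G m := by
    rw [G, Finset.mem_map]
    exact ⟨u, hu, rfl⟩
  rw [mem_G, h, Zsqrtd.norm_zero] at this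
  omega

lemma norm_one_pow (u : GaussianInt) (hu : u.norm = 1) : u ^ 4 = 1 := by
  have hm : u ∈ G 1 := by rw [mem_G]; exact_mod_cast hu
  rw [G, Finset.mem_map] at hm
  obtain ⟨p, hp, rfl⟩ := hm
  have : ∀ p ∈ latticeCircle 1, (⟨p.1, p.2⟩ : GaussianInt) ^ 4 = 1 := by
    unfold latticeCircle
    decide
  exact this p hp

lemma chi_one (k : ℤ) (hk : 4 ∣ k) (u : GaussianInt) (hu : u.norm = 1) : chi k u = 1 := by
  obtain ⟨j, rfl⟩ := hk
  have h := norm_one_pow u hu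
  have h4 : (GaussianInt.toComplex u) ^ 4 = 1 := by rw [← map_pow, h, map_one]
  have hn : ‖GaussianInt.toComplex u‖ = 1 := by
    have := congrArg norm h4
    rw [norm_pow, norm_one] at this
    exact (pow_eq_one_iff_of_nonneg (norm_nonneg _) (by norm_num)).1 this
  unfold chi
  rw [hn, Complex.ofReal_one, div_one, zpow_mul]
  have : (GaussianInt.toComplex u) ^ (4 : ℤ) = 1 := by exact_mod_cast h4
  rw [this, one_zpow]

lemma exists_factor {m n : ℕ} (hm : 0 < m) (hn : 0 < n) (hc : Nat.Coprime m n)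
    (z : GaussianInt) (hz : z.norm = m * n) :
    ∃ a b : GaussianInt, a.norm = m ∧ b.norm = n ∧ a * b = z := by
  have hdvd : z ∣ (m : GaussianInt) * (n : GaussianInt) := by
    refine ⟨star z, ?_⟩
    rw [← Zsqrtd.norm_eq_mul_conj, hz]
    push_cast
    rfl
  obtain ⟨a, b, ha, hb, rfl⟩ := exists_dvd_and_dvd_of_dvd_mul hdvd
  have hA : a.norm ∣ (m : ℤ) * m := by
    obtain ⟨c, hc⟩ := ha
    exact ⟨c.norm, by rw [← Zsqrtd.norm_mul, ← hc, Zsqrtd.norm_natCast]⟩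
  have hB : b.norm ∣ (n : ℤ) * n := by
    obtain ⟨c, hc⟩ := hb
    exact ⟨c.norm, by rw [← Zsqrtd.norm_mul, ← hc, Zsqrtd.norm_natCast]⟩
  rw [Zsqrtd.norm_mul] at hz
  have hcop : IsCoprime (m : ℤ) n := Nat.isCoprime_iff_coprime.2 hc
  have hA' : a.norm ∣ (m : ℤ) :=
    ((hcop.mul_left hcop).of_isCoprime_of_dvd_left hA).dvd_of_dvd_mul_right ⟨_, hz.symm⟩
  have hB' : b.norm ∣ (n : ℤ) :=
    ((hcop.symm.mul_left hcop.symm).of_isCoprime_of_dvd_left hB).dvd_of_dvd_mul_left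
      ⟨a.norm, by rw [← hz, mul_comm]⟩
  have h1 := Int.le_of_dvd (by exact_mod_cast hm) hA'
  have h2 := Int.le_of_dvd (by exact_mod_cast hn) hB'
  have h3 := GaussianInt.norm_nonneg a
  have h4 := GaussianInt.norm_nonneg b
  have hm' : (0 : ℤ) < m := by exact_mod_cast hm
  have hn' : (0 : ℤ) < n := by exact_mod_cast hn
  refine ⟨a, b, ?_, ?_, rfl⟩
  · by_contra h
    have : a.norm < m := lt_of_le_of_ne h1 h
    nlinarith
  · by_contra h
    have : b.norm < n := lt_of_le_of_ne h2 h
    nlinarith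

lemma card_fiber {m n : ℕ} (hm : 0 < m) (hn : 0 < n) (hc : Nat.Coprime m n)
    (z : GaussianInt) (hz : z ∈ G (m * n)) :
    ((G m ×ˢ G n).filter (fun p => p.1 * p.2 = z)).card = 4 := by
  rw [mem_G] at hz
  push_cast at hz
  obtain ⟨a, b, ha, hb, rfl⟩ := exists_factor hm hn hc z hz
  have hm' : (m : ℤ) ≠ 0 := by exact_mod_cast hm.ne'
  have hn' : (n : ℤ) ≠ 0 := by exact_mod_cast hn.ne'
  have ha0 : a ≠ 0 := by rintro rfl; exact hm' (by rw [← ha, Zsqrtd.norm_zero])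
  have hu1 : ∀ u : GaussianInt, u.norm = 1 → u * star u = 1 := by
    intro u hu
    rw [← Zsqrtd.norm_eq_mul_conj, hu, Int.cast_one]
  rw [← card_G_one]
  symm
  refine Finset.card_bij (fun u _ => (a * star u, u * b)) ?_ ?_ ?_
  · intro u hu
    rw [mem_G] at hu
    simp only [Finset.mem_filter, Finset.mem_product, mem_G, Zsqrtd.norm_mul, Zsqrtd.norm_conj, hu,
      ha, hb]
    refine ⟨⟨by simp, by simp⟩, ?_⟩
    have := hu1 u (by simpa using hu)
    linear_combination a * b * this
  · intro u _ v _ h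
    have := (Prod.ext_iff.1 h).1
    exact star_injective (mul_left_cancel₀ ha0 this)
  · rintro ⟨c, d⟩ h
    simp only [Finset.mem_filter, Finset.mem_product, mem_G] at h
    obtain ⟨⟨hcn, hdn⟩, hcd⟩ := h
    have hc0 : c ≠ 0 := by rintro rfl; exact hm' (by rw [← hcn, Zsqrtd.norm_zero])
    have hcop : IsCoprime ((m : ℤ) : GaussianInt) ((n : ℤ) : GaussianInt) :=
      (Nat.isCoprime_iff_coprime.2 hc).map (Int.castRingHom GaussianInt)
    have hcb : IsCoprime c b := by
      refine (hcop.of_isCoprime_of_dvd_left ?_).of_isCoprime_of_dvd_right ?_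
      · exact ⟨star c, by rw [← Zsqrtd.norm_eq_mul_conj, hcn]⟩
      · exact ⟨star b, by rw [← Zsqrtd.norm_eq_mul_conj, hb]⟩
    obtain ⟨u, hu⟩ := hcb.dvd_of_dvd_mul_right ⟨d, hcd.symm⟩
    have hun : u.norm = 1 := by
      have := congrArg Zsqrtd.norm hu
      rw [Zsqrtd.norm_mul, ha, hcn] at this
      exact mul_left_cancel₀ hm' (by rw [← this, mul_one])
    refine ⟨u, by rw [mem_G]; exact_mod_cast hun, ?_⟩
    have h1 := hu1 u hun
    refine Prod.ext ?_ ?_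
    · change a * star u = c
      rw [hu, mul_assoc, h1, mul_one]
    · change u * b = d
      apply mul_left_cancel₀ hc0
      rw [hcd, hu, mul_assoc]

lemma S_mul {m n : ℕ} (hm : 0 < m) (hn : 0 < n) (hc : Nat.Coprime m n) (k : ℤ) :
    latticeS m k * latticeS n k = 4 * latticeS (m * n) k := by
  rw [S_eq m hm, S_eq n hn, S_eq (m * n) (Nat.mul_pos hm hn), Finset.sum_mul_sum,
    ← Finset.sum_product', ← Finset.sum_fiberwise_of_maps_to (s := G m ×ˢ G n) (t := G (m * n))
      (g := fun p => p.1 * p.2), Finset.mul_sum]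
  · refine Finset.sum_congr rfl fun z hz => ?_
    rw [Finset.sum_congr rfl (g := fun _ => chi k z), Finset.sum_const, card_fiber hm hn hc z hz]
    · simp
    · intro p hp
      rw [← (Finset.mem_filter.1 hp).2, chi_mul]
  · intro p hp
    rw [Finset.mem_product, mem_G, mem_G] at hp
    rw [mem_G, Zsqrtd.norm_mul, hp.1, hp.2, Nat.cast_mul]

end LatticeAux

/-- For `4 ∣ k`, the function `f_k(m) = |S(m,k)|/4` is multiplicative on the positive
integers, and satisfies `f_k(m) ≤ r(m)/4`. -/
theorem absS_div_four_multiplicative (k : ℤ) (hk : 4 ∣ k) :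
    (‖latticeS 1 k‖ / 4 = 1) ∧
    (∀ m n : ℕ, 0 < m → 0 < n → Nat.Coprime m n →
      ‖latticeS (m * n) k‖ / 4 =
        (‖latticeS m k‖ / 4) * (‖latticeS n k‖ / 4)) ∧
    (∀ m : ℕ, 1 ≤ m → ‖latticeS m k‖ / 4 ≤ (latticeR m : ℝ) / 4) := by
  refine ⟨?_, ?_, ?_⟩
  · rw [LatticeAux.S_eq 1 one_pos, Finset.sum_congr rfl (g := fun _ => (1 : ℂ))]
    · rw [Finset.sum_const, LatticeAux.card_G_one]
      norm_num
    · intro u hu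
      rw [LatticeAux.mem_G] at hu
      exact LatticeAux.chi_one k hk u (by exact_mod_cast hu)
  · intro m n hm hn hc
    have h := congrArg norm (LatticeAux.S_mul hm hn hc k)
    rw [norm_mul, norm_mul] at h
    have h4 : ‖(4 : ℂ)‖ = 4 := by norm_num
    rw [h4] at h
    linarith
  · intro m _
    have h : ‖latticeS m k‖ ≤ (latticeR m : ℝ) := by
      unfold latticeS latticeR
      refine (norm_sum_le _ _).trans ?_
      rw [Finset.sum_congr rfl (g := fun _ => (1 : ℝ))]
      · simp
      · intro u _
        have := Complex.norm_exp_ofReal_mul_I ((k : ℝ) * latticeTheta u)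
        push_cast at this
        exact this
    linarith
end
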